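/- arXiv:2010.11814 — 15 statements merged into one kernel-verified Lean document; each statement's English description precedes it below -/
import Mathlib

section
/- Let X be a real normed linear space and let f : (0,∞) → ℝ be a nonnegative function. Then for all nonzero vectors x, y ∈ X: f(‖x‖)‖x‖ + f(‖y‖)‖y‖ − (‖x‖ + ‖y‖ − ‖x−y‖)·max{f(‖x‖), f(‖y‖)} ≤ ‖f(‖x‖)x − f(‖y‖)y‖ ≤ f(‖x‖)‖x‖ + f(‖y‖)‖y‖ − (‖x‖ + ‖y‖ − ‖x−y‖)·min{f(‖x‖), f(‖y‖)}. -/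
theorem refined_aux {X : Type*} [NormedAddCommGroup X] [NormedSpace ℝ X]
    (a b : ℝ) (hb : 0 ≤ b) (hab : b ≤ a) (x y : X) :
    a * ‖x - y‖ - (a - b) * ‖y‖ ≤ ‖a • x - b • y‖ ∧
      ‖a • x - b • y‖ ≤ b * ‖x - y‖ + (a - b) * ‖x‖ := by
  have ha : 0 ≤ a := hb.trans hab
  have hc : 0 ≤ a - b := sub_nonneg.2 hab
  constructor
  · have h := norm_sub_le (a • x - b • y) ((a - b) • y)
    have e : a • x - b • y - (a - b) • y = a • (x - y) := by module
    rw [e, norm_smul, norm_smul, Real.norm_of_nonneg ha, Real.norm_of_nonneg hc] at h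
    linarith
  · have h := norm_add_le (b • (x - y)) ((a - b) • x)
    have e : b • (x - y) + (a - b) • x = a • x - b • y := by module
    rw [e, norm_smul, norm_smul, Real.norm_of_nonneg hb, Real.norm_of_nonneg hc] at h
    linarith

theorem refined_triangle_inequality
    {X : Type*} [NormedAddCommGroup X] [NormedSpace ℝ X]
    (f : ℝ → ℝ) (hf : ∀ t : ℝ, 0 < t → 0 ≤ f t)
    (x y : X) (hx : x ≠ 0) (hy : y ≠ 0) :
    f ‖x‖ * ‖x‖ + f ‖y‖ * ‖y‖ - (‖x‖ + ‖y‖ - ‖x - y‖) * max (f ‖x‖) (f ‖y‖)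
        ≤ ‖f ‖x‖ • x - f ‖y‖ • y‖ ∧
      ‖f ‖x‖ • x - f ‖y‖ • y‖
        ≤ f ‖x‖ * ‖x‖ + f ‖y‖ * ‖y‖ - (‖x‖ + ‖y‖ - ‖x - y‖) * min (f ‖x‖) (f ‖y‖) := by
  have h1 := hf _ (norm_pos_iff.2 hx)
  have h2 := hf _ (norm_pos_iff.2 hy)
  rcases le_total (f ‖y‖) (f ‖x‖) with h | h
  · obtain ⟨p, q⟩ := refined_aux _ _ h2 h x y
    rw [max_eq_left h, min_eq_right h]
    constructor <;> linarith
  · obtain ⟨p, q⟩ := refined_aux _ _ h1 h y x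
    rw [max_eq_right h, min_eq_left h, norm_sub_rev (f ‖x‖ • x), norm_sub_rev x y]
    constructor <;> linarith
end

section
/- Let X be a real normed linear space and let p ≥ 1. Then for all nonzero vectors x, y ∈ X: ‖x‖^p + ‖y‖^p − (‖x‖ + ‖y‖ − ‖x−y‖)·(max{‖x‖,‖y‖})^{p−1} ≤ α_p[x,y] ≤ ‖x‖^p + ‖y‖^p − (‖x‖ + ‖y‖ − ‖x−y‖)·(min{‖x‖,‖y‖})^{p−1}. -/
noncomputable def alphaD {X : Type*} [NormedAddCommGroup X] [NormedSpace ℝ X]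
    (p : ℝ) (x y : X) : ℝ :=
  ‖(‖x‖ ^ (p - 1)) • x - (‖y‖ ^ (p - 1)) • y‖

theorem aux_bounds {X : Type*} [NormedAddCommGroup X] [NormedSpace ℝ X]
    (a b : ℝ) (ha : 0 ≤ a) (hab : a ≤ b) (x y : X) :
    a * ‖x‖ + b * ‖y‖ - (‖x‖ + ‖y‖ - ‖x - y‖) * b ≤ ‖a • x - b • y‖ ∧
    ‖a • x - b • y‖ ≤ a * ‖x‖ + b * ‖y‖ - (‖x‖ + ‖y‖ - ‖x - y‖) * a := by
  have h1 : ‖a • x - b • y‖ ≤ ‖a • (x - y)‖ + ‖(b - a) • y‖ := by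
    have e : a • x - b • y = a • (x - y) - (b - a) • y := by module
    rw [e]; exact norm_sub_le _ _
  have h2 : ‖b • (x - y)‖ ≤ ‖a • x - b • y‖ + ‖(b - a) • x‖ := by
    have e : b • (x - y) = (a • x - b • y) + (b - a) • x := by module
    rw [e]; exact norm_add_le _ _
  rw [norm_smul, norm_smul, Real.norm_of_nonneg ha, Real.norm_of_nonneg (sub_nonneg.2 hab)] at h1
  rw [norm_smul, norm_smul _ x, Real.norm_of_nonneg (ha.trans hab),
    Real.norm_of_nonneg (sub_nonneg.2 hab)] at h2
  constructor <;> linarith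

theorem pAngular_bounds_p_ge_one
    {X : Type*} [NormedAddCommGroup X] [NormedSpace ℝ X]
    (p : ℝ) (hp : 1 ≤ p) (x y : X) (hx : x ≠ 0) (hy : y ≠ 0) :
    ‖x‖ ^ p + ‖y‖ ^ p - (‖x‖ + ‖y‖ - ‖x - y‖) * (max ‖x‖ ‖y‖) ^ (p - 1)
        ≤ alphaD p x y ∧
      alphaD p x y
        ≤ ‖x‖ ^ p + ‖y‖ ^ p - (‖x‖ + ‖y‖ - ‖x - y‖) * (min ‖x‖ ‖y‖) ^ (p - 1) := by
  have key : ∀ z : X, z ≠ 0 → ‖z‖ ^ p = ‖z‖ ^ (p - 1) * ‖z‖ := by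
    intro z hz
    have h := Real.rpow_add (norm_pos_iff.2 hz) (p - 1) 1
    rwa [Real.rpow_one, sub_add_cancel] at h
  have hp' : 0 ≤ p - 1 := by linarith
  unfold alphaD
  rw [key x hx, key y hy]
  rcases le_total ‖x‖ ‖y‖ with h | h
  · rw [max_eq_right h, min_eq_left h]
    exact aux_bounds _ _ (Real.rpow_nonneg (norm_nonneg _) _)
      (Real.rpow_le_rpow (norm_nonneg _) h hp') x y
  · rw [max_eq_left h, min_eq_right h]
    have := aux_bounds _ _ (Real.rpow_nonneg (norm_nonneg y) (p - 1))
      (Real.rpow_le_rpow (norm_nonneg _) h hp') y x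
    rw [norm_sub_rev y x, norm_sub_rev (_ • y)] at this
    constructor <;> linarith [this.1, this.2]
end

section
/- Let X be a real normed linear space and let p ≥ 1. Then for all nonzero vectors x, y ∈ X: α_p[x,y] ≥ (p/(2p−1))·(max{‖x‖,‖y‖})^{p−1}·‖x−y‖. -/
theorem aux_le {X : Type*} [NormedAddCommGroup X] [NormedSpace ℝ X]
    (p : ℝ) (hp : 1 ≤ p) (x y : X) (hx : x ≠ 0) (hy : y ≠ 0) (h : ‖y‖ ≤ ‖x‖) :
    p * (‖x‖ ^ (p - 1) * ‖x - y‖) ≤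
      (2 * p - 1) * ‖(‖x‖ ^ (p - 1)) • x - (‖y‖ ^ (p - 1)) • y‖ := by
  have ha : 0 < ‖x‖ := norm_pos_iff.mpr hx
  have hb : 0 < ‖y‖ := norm_pos_iff.mpr hy
  have hA : 0 < ‖x‖ ^ (p - 1) := Real.rpow_pos_of_pos ha _
  have hB : 0 < ‖y‖ ^ (p - 1) := Real.rpow_pos_of_pos hb _
  have hBA : ‖y‖ ^ (p - 1) ≤ ‖x‖ ^ (p - 1) :=
    Real.rpow_le_rpow hb.le h (by linarith)
  have key : p * (‖x‖ ^ (p - 1) * ‖y‖) ≤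
      (p - 1) * (‖x‖ ^ (p - 1) * ‖x‖) + ‖y‖ ^ (p - 1) * ‖y‖ := by
    have hbern := one_add_mul_self_le_rpow_one_add (s := ‖y‖ / ‖x‖ - 1)
      (by have := div_pos hb ha; linarith) hp
    rw [add_sub_cancel, Real.div_rpow hb.le ha.le] at hbern
    have e1 : ‖x‖ ^ p = ‖x‖ ^ (p - 1) * ‖x‖ := by
      rw [← Real.rpow_add_one ha.ne']; simp
    have e2 : ‖y‖ ^ p = ‖y‖ ^ (p - 1) * ‖y‖ := by
      rw [← Real.rpow_add_one hb.ne']; simp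
    rw [e1, e2, le_div_iff₀ (by positivity)] at hbern
    have e3 : (1 + p * (‖y‖ / ‖x‖ - 1)) * (‖x‖ ^ (p - 1) * ‖x‖) =
      ‖x‖ ^ (p - 1) * ‖x‖ + p * (‖x‖ ^ (p - 1) * ‖y‖) - p * (‖x‖ ^ (p - 1) * ‖x‖) := by
      field_simp
      ring
    linarith
  generalize ‖x‖ ^ (p - 1) = A at *
  generalize ‖y‖ ^ (p - 1) = B at *
  have h1 : A * ‖x‖ - B * ‖y‖ ≤ ‖A • x - B • y‖ := by
    have := norm_sub_norm_le (A • x) (B • y)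
    rwa [norm_smul_of_nonneg hA.le, norm_smul_of_nonneg hB.le] at this
  have h2 : A * ‖x - y‖ ≤ ‖A • x - B • y‖ + (A - B) * ‖y‖ := by
    have := norm_sub_le (A • x - B • y) ((A - B) • y)
    rw [norm_smul_of_nonneg (sub_nonneg.mpr hBA)] at this
    rw [← norm_smul_of_nonneg hA.le]
    have e : A • (x - y) = A • x - B • y - (A - B) • y := by module
    rw [e]
    exact this
  have h3 := mul_le_mul_of_nonneg_left h1 (sub_nonneg.mpr hp)
  have h4 := mul_le_mul_of_nonneg_left h2 (by linarith : 0 ≤ p)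
  linarith

theorem pAngular_lower_bound_p_ge_one
    {X : Type*} [NormedAddCommGroup X] [NormedSpace ℝ X]
    (p : ℝ) (hp : 1 ≤ p) (x y : X) (hx : x ≠ 0) (hy : y ≠ 0) :
    alphaD p x y ≥ (p / (2 * p - 1)) * (max ‖x‖ ‖y‖) ^ (p - 1) * ‖x - y‖ := by
  have hq : 0 < 2 * p - 1 := by linarith
  rw [ge_iff_le, mul_assoc, div_mul_eq_mul_div, div_le_iff₀ hq, mul_comm (alphaD p x y)]
  unfold alphaD
  rcases le_total ‖y‖ ‖x‖ with h | h
  · rw [max_eq_left h]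
    exact aux_le p hp x y hx hy h
  · rw [max_eq_right h, norm_sub_rev x y, norm_sub_rev (_ • x)]
    exact aux_le p hp y x hy hx h
end

section
/- Let X be a real normed linear space and let p < 0. Then for all nonzero vectors x, y ∈ X: α_p[x,y] ≥ (p/(2p−1))·((min{‖x‖,‖y‖})^p / max{‖x‖,‖y‖})·‖x−y‖. -/
theorem pAngular_scalar (q s : ℝ) (hq : 0 < q) (hs : 0 < s) :
    (q + 1) * s ^ q ≤ 1 + q * (s * s ^ q) := by
  have h := Real.geom_mean_le_arith_mean2_weighted (w₁ := 1 / (q + 1)) (w₂ := q / (q + 1))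
    (p₁ := 1) (p₂ := s ^ (q + 1)) (by positivity) (by positivity) (by norm_num) (by positivity)
    (by field_simp; ring)
  rw [Real.one_rpow, one_mul, ← Real.rpow_mul hs.le, mul_div_cancel₀ q (by positivity : q + 1 ≠ 0),
    Real.rpow_add hs, Real.rpow_one] at h
  have h2 := mul_le_mul_of_nonneg_left h (by positivity : 0 ≤ q + 1)
  have h3 : (q + 1) * (1 / (q + 1) * 1 + q / (q + 1) * (s ^ q * s)) = 1 + q * (s * s ^ q) := by
    field_simp
  linarith

theorem pAngular_aux
    {X : Type*} [NormedAddCommGroup X] [NormedSpace ℝ X]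
    (p : ℝ) (hp : p < 0) (x y : X) (hx : x ≠ 0) (hy : y ≠ 0) (hxy : ‖x‖ ≤ ‖y‖) :
    (p / (2 * p - 1)) * (‖x‖ ^ p / ‖y‖) * ‖x - y‖ ≤ alphaD p x y := by
  unfold alphaD
  have ha : 0 < ‖x‖ := norm_pos_iff.mpr hx
  have hb : 0 < ‖y‖ := norm_pos_iff.mpr hy
  rw [Real.rpow_sub_one ha.ne', Real.rpow_sub_one hb.ne']
  have hP : 0 < ‖x‖ ^ p := Real.rpow_pos_of_pos ha p
  have hQ : 0 < ‖y‖ ^ p := Real.rpow_pos_of_pos hb p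
  have key := pAngular_scalar (-p) (‖x‖ / ‖y‖) (by linarith) (by positivity)
  have hr : (‖x‖ / ‖y‖) ^ (-p) = ‖y‖ ^ p / ‖x‖ ^ p := by
    rw [Real.rpow_neg (by positivity), Real.div_rpow ha.le hb.le, inv_div]
  have hQP : ‖y‖ ^ p ≤ ‖x‖ ^ p := Real.rpow_le_rpow_of_nonpos ha hxy hp.le
  rw [hr] at key
  set a := ‖x‖ with hadef
  set b := ‖y‖ with hbdef
  set P := a ^ p
  set Q := b ^ p
  set u := (P / a) • x - (Q / b) • y with hu
  have hA : P - Q ≤ ‖u‖ := by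
    have h := norm_sub_norm_le ((P / a) • x) ((Q / b) • y)
    rw [norm_smul, norm_smul, Real.norm_of_nonneg (by positivity),
      Real.norm_of_nonneg (by positivity), ← hadef, ← hbdef,
      div_mul_cancel₀ _ ha.ne', div_mul_cancel₀ _ hb.ne'] at h
    exact h
  have hs1 : a / b ≤ 1 := (div_le_one hb).mpr hxy
  have hr1 : Q / P ≤ 1 := (div_le_one hP).mpr hQP
  have hs0 : 0 < a / b := by positivity
  have hr0 : 0 < Q / P := by positivity
  have hsr : (a / b) * (Q / P) ≤ 1 := by nlinarith
  have hdec : x - y = (a / P) • u - (1 - (a / b) * (Q / P)) • y := by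
    rw [hu, smul_sub, smul_smul, smul_smul, sub_smul, one_smul,
      show a / P * (P / a) = 1 by field_simp,
      show a / P * (Q / b) = a / b * (Q / P) by field_simp, one_smul]
    abel
  have hN : ‖x - y‖ ≤ (a / P) * ‖u‖ + (1 - (a / b) * (Q / P)) * b := by
    rw [hdec]
    refine (norm_sub_le _ _).trans (le_of_eq ?_)
    rw [norm_smul, norm_smul, Real.norm_of_nonneg (by positivity),
      Real.norm_of_nonneg (by linarith)]
  have hA0 : 0 ≤ ‖u‖ := norm_nonneg u
  have h1 : P / b * ‖x - y‖ ≤ (a / b) * ‖u‖ + P * (1 - (a / b) * (Q / P)) := by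
    refine (mul_le_mul_of_nonneg_left hN (by positivity)).trans (le_of_eq ?_)
    field_simp
  have h2 : (-p) * (P * (1 - (a / b) * (Q / P))) ≤ (-p + 1) * ‖u‖ := by
    have h3 : P * (Q / P) = Q := by field_simp
    have h4 := mul_le_mul_of_nonneg_left key hP.le
    have h5 := mul_le_mul_of_nonneg_left hA (by linarith : 0 ≤ -p + 1)
    have h6 : P * ((-p + 1) * (Q / P)) = (-p + 1) * Q := by rw [← h3]; field_simp
    nlinarith
  have h7 : a / b * ‖u‖ ≤ ‖u‖ := by nlinarith
  have h8 : (-p) * (P / b * ‖x - y‖) ≤ (1 - 2 * p) * ‖u‖ := by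
    have h9 := mul_le_mul_of_nonneg_left h1 (by linarith : 0 ≤ -p)
    have h10 := mul_le_mul_of_nonneg_left h7 (by linarith : 0 ≤ -p)
    linarith
  have h11 : p / (2 * p - 1) = (-p) / (1 - 2 * p) := by
    rw [← neg_div_neg_eq, neg_sub]
  rw [h11, mul_assoc, div_mul_eq_mul_div, div_le_iff₀ (by linarith)]
  linarith

theorem pAngular_lower_bound_p_neg
    {X : Type*} [NormedAddCommGroup X] [NormedSpace ℝ X]
    (p : ℝ) (hp : p < 0) (x y : X) (hx : x ≠ 0) (hy : y ≠ 0) :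
    alphaD p x y
      ≥ (p / (2 * p - 1)) * ((min ‖x‖ ‖y‖) ^ p / max ‖x‖ ‖y‖) * ‖x - y‖ := by
  rcases le_total ‖x‖ ‖y‖ with h | h
  · rw [min_eq_left h, max_eq_right h]
    exact pAngular_aux p hp x y hx hy h
  · rw [min_eq_right h, max_eq_left h, norm_sub_rev x y]
    have h2 : alphaD p x y = alphaD p y x := norm_sub_rev _ _
    rw [h2]
    exact pAngular_aux p hp y x hy hx h
end

section
/- Let X be a real normed linear space, let p ≥ 1, and let x, y ∈ X be nonzero. Write m = min{‖x‖,‖y‖}, M = max{‖x‖,‖y‖}, and Δ = |‖x‖^{p−1} − ‖y‖^{p−1}|. Then the following chain holds: ‖x−y‖·m^{p−1} − Δ·m ≤ ‖x−y‖·M^{p−1} − Δ·M ≤ ‖x‖^p + ‖y‖^p − (‖x‖+‖y‖−‖x−y‖)·M^{p−1} ≤ α_p[x,y] ≤ ‖x‖^p + ‖y‖^p − (‖x‖+‖y‖−‖x−y‖)·m^{p−1} = ‖x−y‖·m^{p−1} + Δ·M ≤ ‖x−y‖·M^{p−1} + Δ·m. -/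
theorem chain_aux
    {X : Type*} [NormedAddCommGroup X] [NormedSpace ℝ X]
    (x y : X) (A B : ℝ) (hB : 0 ≤ B) (hAB : B ≤ A) (hxy : ‖y‖ ≤ ‖x‖) :
    ‖x - y‖ * B - (A - B) * ‖y‖ ≤ ‖x - y‖ * A - (A - B) * ‖x‖ ∧
    ‖x - y‖ * A - (A - B) * ‖x‖
        ≤ A * ‖x‖ + B * ‖y‖ - (‖x‖ + ‖y‖ - ‖x - y‖) * A ∧
    A * ‖x‖ + B * ‖y‖ - (‖x‖ + ‖y‖ - ‖x - y‖) * A ≤ ‖A • x - B • y‖ ∧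
    ‖A • x - B • y‖ ≤ A * ‖x‖ + B * ‖y‖ - (‖x‖ + ‖y‖ - ‖x - y‖) * B ∧
    A * ‖x‖ + B * ‖y‖ - (‖x‖ + ‖y‖ - ‖x - y‖) * B
        = ‖x - y‖ * B + (A - B) * ‖x‖ ∧
    ‖x - y‖ * B + (A - B) * ‖x‖ ≤ ‖x - y‖ * A + (A - B) * ‖y‖ := by
  have hd : ‖x‖ - ‖y‖ ≤ ‖x - y‖ := norm_sub_norm_le x y
  have hAB' : 0 ≤ A - B := sub_nonneg.2 hAB
  have h1 := mul_le_mul_of_nonneg_left hd hAB'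
  have h2 := mul_le_mul_of_nonneg_left hxy hAB'
  have h3 : A * ‖x - y‖ ≤ ‖A • x - B • y‖ + (A - B) * ‖y‖ := by
    have e : A • (x - y) = (A • x - B • y) - (A - B) • y := by module
    calc A * ‖x - y‖ = ‖A • (x - y)‖ := by
          rw [norm_smul, Real.norm_of_nonneg (hB.trans hAB)]
      _ ≤ ‖A • x - B • y‖ + ‖(A - B) • y‖ := by rw [e]; exact norm_sub_le _ _
      _ = _ := by rw [norm_smul (A - B), Real.norm_of_nonneg hAB']
  have h4 : ‖A • x - B • y‖ ≤ (A - B) * ‖x‖ + B * ‖x - y‖ := by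
    have e : A • x - B • y = (A - B) • x + B • (x - y) := by module
    calc ‖A • x - B • y‖ ≤ ‖(A - B) • x‖ + ‖B • (x - y)‖ := by
          rw [e]; exact norm_add_le _ _
      _ = _ := by
          rw [norm_smul, norm_smul, Real.norm_of_nonneg hAB', Real.norm_of_nonneg hB]
  refine ⟨?_, ?_, ?_, ?_, ?_, ?_⟩ <;> linarith

theorem pAngular_bound_chain_p_ge_one
    {X : Type*} [NormedAddCommGroup X] [NormedSpace ℝ X]
    (p : ℝ) (hp : 1 ≤ p) (x y : X) (hx : x ≠ 0) (hy : y ≠ 0)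
    (m M Δ : ℝ) (hm : m = min ‖x‖ ‖y‖) (hM : M = max ‖x‖ ‖y‖)
    (hΔ : Δ = |‖x‖ ^ (p - 1) - ‖y‖ ^ (p - 1)|) :
    ‖x - y‖ * m ^ (p - 1) - Δ * m ≤ ‖x - y‖ * M ^ (p - 1) - Δ * M ∧
    ‖x - y‖ * M ^ (p - 1) - Δ * M
        ≤ ‖x‖ ^ p + ‖y‖ ^ p - (‖x‖ + ‖y‖ - ‖x - y‖) * M ^ (p - 1) ∧
    ‖x‖ ^ p + ‖y‖ ^ p - (‖x‖ + ‖y‖ - ‖x - y‖) * M ^ (p - 1) ≤ alphaD p x y ∧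
    alphaD p x y ≤ ‖x‖ ^ p + ‖y‖ ^ p - (‖x‖ + ‖y‖ - ‖x - y‖) * m ^ (p - 1) ∧
    ‖x‖ ^ p + ‖y‖ ^ p - (‖x‖ + ‖y‖ - ‖x - y‖) * m ^ (p - 1)
        = ‖x - y‖ * m ^ (p - 1) + Δ * M ∧
    ‖x - y‖ * m ^ (p - 1) + Δ * M ≤ ‖x - y‖ * M ^ (p - 1) + Δ * m := by
  have px : ‖x‖ ^ p = ‖x‖ ^ (p - 1) * ‖x‖ := by
    rw [← Real.rpow_add_one (norm_ne_zero_iff.2 hx), sub_add_cancel]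
  have py : ‖y‖ ^ p = ‖y‖ ^ (p - 1) * ‖y‖ := by
    rw [← Real.rpow_add_one (norm_ne_zero_iff.2 hy), sub_add_cancel]
  have hp' : 0 ≤ p - 1 := sub_nonneg.2 hp
  unfold alphaD
  rw [px, py]
  rcases le_total ‖y‖ ‖x‖ with h | h
  · have hr := Real.rpow_le_rpow (norm_nonneg y) h hp'
    rw [min_eq_right h] at hm
    rw [max_eq_left h] at hM
    rw [abs_of_nonneg (sub_nonneg.2 hr)] at hΔ
    subst hm hM hΔ
    exact chain_aux x y _ _ (Real.rpow_nonneg (norm_nonneg y) _) hr h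
  · have hr := Real.rpow_le_rpow (norm_nonneg x) h hp'
    rw [min_eq_left h] at hm
    rw [max_eq_right h] at hM
    rw [abs_sub_comm, abs_of_nonneg (sub_nonneg.2 hr)] at hΔ
    subst hm hM hΔ
    have := chain_aux y x _ _ (Real.rpow_nonneg (norm_nonneg x) _) hr h
    rw [norm_sub_rev x y, norm_sub_rev (_ • x) (_ • y),
      add_comm (_ * ‖x‖) (_ * ‖y‖), add_comm ‖x‖ ‖y‖]
    exact this
end

section
/- Let X be a real normed linear space and let x, y ∈ X be nonzero. If 1 ≤ p ≤ 2, then ‖x‖^p + ‖y‖^p − (‖x‖+‖y‖−‖x−y‖)·(max{‖x‖,‖y‖})^{p−1} ≥ 0. If 0 ≤ p < 1, then ‖x‖^p + ‖y‖^p − (‖x‖+‖y‖−‖x−y‖)·(min{‖x‖,‖y‖})^{p−1} ≥ 0. -/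
theorem aux_ge (a b d p : ℝ) (hb : 0 < b) (hab : b ≤ a) (hd : a - b ≤ d) :
    (1 ≤ p → p ≤ 2 → 0 ≤ a ^ p + b ^ p - (a + b - d) * a ^ (p - 1)) ∧
    (0 ≤ p → p < 1 → 0 ≤ a ^ p + b ^ p - (a + b - d) * b ^ (p - 1)) := by
  have ha : 0 < a := hb.trans_le hab
  have ea : a ^ p = a ^ (p - 1) * a := by
    rw [Real.rpow_sub_one ha.ne']; field_simp
  have eb : b ^ p = b ^ (p - 1) * b := by
    rw [Real.rpow_sub_one hb.ne']; field_simp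
  have pa : 0 < a ^ (p - 1) := Real.rpow_pos_of_pos ha _
  have pb : 0 < b ^ (p - 1) := Real.rpow_pos_of_pos hb _
  constructor
  · intro h1 h2
    have ea' : a ^ (p - 1) = a ^ (p - 2) * a := by
      rw [show p - 2 = p - 1 - 1 by ring, Real.rpow_sub_one ha.ne' (p - 1), div_mul_cancel₀ _ ha.ne']
    have eb' : b ^ (p - 1) = b ^ (p - 2) * b := by
      rw [show p - 2 = p - 1 - 1 by ring, Real.rpow_sub_one hb.ne' (p - 1), div_mul_cancel₀ _ hb.ne']
    have hm : a ^ (p - 2) ≤ b ^ (p - 2) :=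
      Real.rpow_le_rpow_of_nonpos hb hab (by linarith)
    have pb2 : 0 < b ^ (p - 2) := Real.rpow_pos_of_pos hb _
    have key : a ^ (p - 1) * (2 * b - a) ≤ b ^ (p - 1) * b := by
      rcases le_total (2 * b) a with h | h
      · have := mul_nonneg pa.le (sub_nonneg.2 h)
        have := mul_pos pb hb
        linarith
      · rw [ea', eb']
        have h3 := mul_le_mul_of_nonneg_right hm (mul_nonneg ha.le (sub_nonneg.2 h))
        have h4 := mul_nonneg pb2.le (sq_nonneg (a - b))
        linarith
    have h5 := mul_le_mul_of_nonneg_right (show a + b - d ≤ 2 * b by linarith) pa.le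
    rw [ea, eb]
    linarith
  · intro h1 h2
    have hm : b ^ p ≤ a ^ p := Real.rpow_le_rpow hb.le hab h1
    have h5 := mul_le_mul_of_nonneg_right (show a + b - d ≤ 2 * b by linarith) pb.le
    linarith

theorem lower_bounds_nonneg
    {X : Type*} [NormedAddCommGroup X] [NormedSpace ℝ X]
    (x y : X) (hx : x ≠ 0) (hy : y ≠ 0) (p : ℝ) :
    (1 ≤ p → p ≤ 2 →
      0 ≤ ‖x‖ ^ p + ‖y‖ ^ p - (‖x‖ + ‖y‖ - ‖x - y‖) * (max ‖x‖ ‖y‖) ^ (p - 1)) ∧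
    (0 ≤ p → p < 1 →
      0 ≤ ‖x‖ ^ p + ‖y‖ ^ p - (‖x‖ + ‖y‖ - ‖x - y‖) * (min ‖x‖ ‖y‖) ^ (p - 1)) := by
  rcases le_total ‖y‖ ‖x‖ with h | h
  · rw [max_eq_left h, min_eq_right h]
    exact aux_ge _ _ _ p (norm_pos_iff.2 hy) h (norm_sub_norm_le x y)
  · rw [max_eq_right h, min_eq_left h, add_comm (‖x‖ ^ p), add_comm ‖x‖, norm_sub_rev]
    exact aux_ge _ _ _ p (norm_pos_iff.2 hx) h (norm_sub_norm_le y x)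
end

section
/- Let X be a real normed linear space and let x, y ∈ X be nonzero. Write m = min{‖x‖,‖y‖}, M = max{‖x‖,‖y‖}. Then: (i) if p ≥ 1, then ‖x‖^p + ‖y‖^p − (‖x‖+‖y‖−‖x−y‖)·m^{p−1} ≤ p·M^{p−1}·‖x−y‖; (ii) if 0 ≤ p < 1, then ‖x‖^p + ‖y‖^p − (‖x‖+‖y‖−‖x−y‖)·M^{p−1} ≤ (2−p)·M^{p−1}·‖x−y‖; (iii) if p < 0, then ‖x‖^p + ‖y‖^p − (‖x‖+‖y‖−‖x−y‖)·M^{p−1} ≤ (2−p)·(m^p/M)·‖x−y‖; (iv) if 0 ≤ p < 1, then p·M^{p−1}·‖x−y‖ ≤ ‖x‖^p + ‖y‖^p − (‖x‖+‖y‖−‖x−y‖)·m^{p−1}. -/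
theorem aux_real (a b d p : ℝ) (ha : 0 < a) (hab : a ≤ b) (hd : b - a ≤ d) :
    (1 ≤ p → a ^ p + b ^ p - (a + b - d) * a ^ (p - 1) ≤ p * b ^ (p - 1) * d) ∧
    (0 ≤ p → p < 1 →
      a ^ p + b ^ p - (a + b - d) * b ^ (p - 1) ≤ (2 - p) * b ^ (p - 1) * d) ∧
    (p < 0 →
      a ^ p + b ^ p - (a + b - d) * b ^ (p - 1) ≤ (2 - p) * (a ^ p / b) * d) ∧
    (0 ≤ p → p < 1 →
      p * b ^ (p - 1) * d ≤ a ^ p + b ^ p - (a + b - d) * a ^ (p - 1)) := by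
  have hb : 0 < b := ha.trans_le hab
  have hd0 : 0 ≤ d := by linarith
  have hA : a ^ p = a * a ^ (p - 1) := by
    rw [Real.rpow_sub_one ha.ne']; field_simp
  have hB : b ^ p = b * b ^ (p - 1) := by
    rw [Real.rpow_sub_one hb.ne']; field_simp
  have hBpos : 0 < b ^ (p - 1) := Real.rpow_pos_of_pos hb _
  have hApos : 0 < a ^ (p - 1) := Real.rpow_pos_of_pos ha _
  have hs : -1 ≤ (a / b - 1) := by
    have : 0 < a / b := by positivity
    linarith
  have hdiv : (a / b) ^ p = a * a ^ (p - 1) / (b * b ^ (p - 1)) := by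
    rw [Real.div_rpow ha.le hb.le, hA, hB]
  have hdiv2 : (a / b) ^ (1 - p) = b ^ (p - 1) / a ^ (p - 1) := by
    rw [show 1 - p = -(p - 1) by ring, Real.rpow_neg (by positivity),
      Real.div_rpow ha.le hb.le, inv_div]
  have hAB : p < 1 → b ^ (p - 1) ≤ a ^ (p - 1) := fun h =>
    Real.rpow_le_rpow_of_nonpos ha hab (by linarith)
  have key : 0 ≤ p → p < 1 →
      a * a ^ (p - 1) ≤ b * b ^ (p - 1) - p * b ^ (p - 1) * (b - a) := by
    intro h0 h1
    have h := rpow_one_add_le_one_add_mul_self hs h0 h1.le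
    rw [add_sub_cancel, hdiv, div_le_iff₀ (by positivity)] at h
    refine h.trans (le_of_eq ?_)
    field_simp
    ring
  refine ⟨fun h1 => ?_, fun h0 h1 => ?_, fun h1 => ?_, fun h0 h1 => ?_⟩
  · have h := one_add_mul_self_le_rpow_one_add hs h1
    rw [add_sub_cancel, hdiv, le_div_iff₀ (by positivity)] at h
    have e : (1 + p * (a / b - 1)) * (b * b ^ (p - 1))
        = b * b ^ (p - 1) - p * b ^ (p - 1) * (b - a) := by
      field_simp
      ring
    rw [e] at h
    have hle : a ^ (p - 1) ≤ b ^ (p - 1) := Real.rpow_le_rpow ha.le hab (by linarith)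
    rw [hA, hB]
    generalize a ^ (p - 1) = A at *
    generalize b ^ (p - 1) = B at *
    have : 0 ≤ p * B - A := by nlinarith
    nlinarith [mul_le_mul_of_nonneg_right hd this]
  · have k := key h0 h1
    rw [hA, hB]
    have : 0 ≤ (1 - p) * b ^ (p - 1) := mul_nonneg (by linarith) hBpos.le
    nlinarith [mul_le_mul_of_nonneg_right hd this]
  · have h := one_add_mul_self_le_rpow_one_add hs (show 1 ≤ 1 - p by linarith)
    rw [add_sub_cancel, hdiv2, le_div_iff₀ hApos] at h
    have hle : b ^ p ≤ a ^ p := Real.rpow_le_rpow_of_nonpos ha hab h1.le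
    rw [hA, hB] at hle
    rw [hA, hB]
    generalize a ^ (p - 1) = A at *
    generalize b ^ (p - 1) = B at *
    have h2 : B ≤ a * A / b := by rw [le_div_iff₀ hb]; linarith
    have h3 : a * (A - B) ≤ (1 - p) * (a * A / b) * (b - a) := by
      have e : (1 - p) * (a * A / b) * (b - a) = a * (A - (1 + (1 - p) * (a / b - 1)) * A) := by
        field_simp
        ring
      rw [e]
      apply mul_le_mul_of_nonneg_left _ ha.le
      linarith
    have h4 : 0 ≤ (1 - p) * (a * A / b) := mul_nonneg (by linarith) (by positivity)
    nlinarith [mul_le_mul_of_nonneg_left hd h4, mul_le_mul_of_nonneg_right h2 hd0]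
  · have k := key h0 h1
    have hle := hAB h1
    rw [hA, hB]
    have : 0 ≤ a ^ (p - 1) - p * b ^ (p - 1) := by nlinarith
    nlinarith [mul_le_mul_of_nonneg_right hd this]

theorem refined_bounds_vs_maligranda
    {X : Type*} [NormedAddCommGroup X] [NormedSpace ℝ X]
    (x y : X) (hx : x ≠ 0) (hy : y ≠ 0) (p : ℝ)
    (m M : ℝ) (hm : m = min ‖x‖ ‖y‖) (hM : M = max ‖x‖ ‖y‖) :
    (1 ≤ p →
      ‖x‖ ^ p + ‖y‖ ^ p - (‖x‖ + ‖y‖ - ‖x - y‖) * m ^ (p - 1)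
        ≤ p * M ^ (p - 1) * ‖x - y‖) ∧
    (0 ≤ p → p < 1 →
      ‖x‖ ^ p + ‖y‖ ^ p - (‖x‖ + ‖y‖ - ‖x - y‖) * M ^ (p - 1)
        ≤ (2 - p) * M ^ (p - 1) * ‖x - y‖) ∧
    (p < 0 →
      ‖x‖ ^ p + ‖y‖ ^ p - (‖x‖ + ‖y‖ - ‖x - y‖) * M ^ (p - 1)
        ≤ (2 - p) * (m ^ p / M) * ‖x - y‖) ∧
    (0 ≤ p → p < 1 →
      p * M ^ (p - 1) * ‖x - y‖
        ≤ ‖x‖ ^ p + ‖y‖ ^ p - (‖x‖ + ‖y‖ - ‖x - y‖) * m ^ (p - 1)) := by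
  have hx' : 0 < ‖x‖ := norm_pos_iff.mpr hx
  have hy' : 0 < ‖y‖ := norm_pos_iff.mpr hy
  rcases le_total ‖x‖ ‖y‖ with h | h
  · rw [min_eq_left h] at hm
    rw [max_eq_right h] at hM
    subst hm hM
    refine aux_real _ _ _ p hx' h ?_
    rw [norm_sub_rev]
    exact norm_sub_norm_le y x
  · rw [min_eq_right h] at hm
    rw [max_eq_left h] at hM
    subst hm hM
    have := aux_real ‖y‖ ‖x‖ ‖x - y‖ p hy' h (norm_sub_norm_le x y)
    rw [add_comm (‖y‖ ^ p), add_comm ‖y‖] at this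
    exact this
end

section
/- Let X be a real normed linear space, let p ≥ 1, and let x, y ∈ X be nonzero with ‖x‖ ≠ ‖y‖. Then α_p[x,y] ≤ ‖x‖^p + ‖y‖^p − (‖x‖+‖y‖−‖x−y‖)·(min{‖x‖,‖y‖})^{p−1} ≤ ((‖y‖^p − ‖x‖^p)/(‖y‖ − ‖x‖))·‖x−y‖; in particular the refined bound is more accurate than the Hile bound. -/
theorem refined_aux_s10
    {X : Type*} [NormedAddCommGroup X] [NormedSpace ℝ X]
    (p : ℝ) (hp : 1 ≤ p) (x y : X) (hx : x ≠ 0) (hy : y ≠ 0)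
    (hxy : ‖x‖ < ‖y‖) :
    ‖(‖x‖ ^ (p - 1)) • x - (‖y‖ ^ (p - 1)) • y‖
        ≤ ‖x‖ ^ p + ‖y‖ ^ p - (‖x‖ + ‖y‖ - ‖x - y‖) * ‖x‖ ^ (p - 1) ∧
      ‖x‖ ^ p + ‖y‖ ^ p - (‖x‖ + ‖y‖ - ‖x - y‖) * ‖x‖ ^ (p - 1)
        ≤ ((‖y‖ ^ p - ‖x‖ ^ p) / (‖y‖ - ‖x‖)) * ‖x - y‖ := by
  have ha : 0 < ‖x‖ := norm_pos_iff.mpr hx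
  have hb : 0 < ‖y‖ := norm_pos_iff.mpr hy
  have e1 : ‖x‖ ^ p = ‖x‖ ^ (p - 1) * ‖x‖ := by
    rw [Real.rpow_sub_one ha.ne']; field_simp
  have e2 : ‖y‖ ^ p = ‖y‖ ^ (p - 1) * ‖y‖ := by
    rw [Real.rpow_sub_one hb.ne']; field_simp
  have hA : 0 ≤ ‖x‖ ^ (p - 1) := by positivity
  have hAB : ‖x‖ ^ (p - 1) ≤ ‖y‖ ^ (p - 1) :=
    Real.rpow_le_rpow ha.le hxy.le (by linarith)
  have hd : ‖y‖ - ‖x‖ ≤ ‖x - y‖ := by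
    rw [norm_sub_rev]; exact norm_sub_norm_le y x
  rw [e1, e2]
  generalize ‖x‖ ^ (p - 1) = A at *
  generalize ‖y‖ ^ (p - 1) = B at *
  constructor
  · have h : A • x - B • y = A • (x - y) - (B - A) • y := by module
    have h2 := norm_sub_le (A • (x - y)) ((B - A) • y)
    rw [norm_smul, norm_smul, Real.norm_of_nonneg hA,
      Real.norm_of_nonneg (sub_nonneg.mpr hAB)] at h2
    rw [h]
    linarith
  · have hpos : 0 < ‖y‖ - ‖x‖ := by linarith
    rw [div_mul_eq_mul_div, le_div_iff₀ hpos]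
    nlinarith [mul_nonneg (mul_nonneg hb.le (sub_nonneg.mpr hAB)) (sub_nonneg.mpr hd)]

theorem refined_bound_vs_hile
    {X : Type*} [NormedAddCommGroup X] [NormedSpace ℝ X]
    (p : ℝ) (hp : 1 ≤ p) (x y : X) (hx : x ≠ 0) (hy : y ≠ 0)
    (hxy : ‖x‖ ≠ ‖y‖) :
    alphaD p x y
        ≤ ‖x‖ ^ p + ‖y‖ ^ p - (‖x‖ + ‖y‖ - ‖x - y‖) * (min ‖x‖ ‖y‖) ^ (p - 1) ∧
      ‖x‖ ^ p + ‖y‖ ^ p - (‖x‖ + ‖y‖ - ‖x - y‖) * (min ‖x‖ ‖y‖) ^ (p - 1)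
        ≤ ((‖y‖ ^ p - ‖x‖ ^ p) / (‖y‖ - ‖x‖)) * ‖x - y‖ := by
  unfold alphaD
  rcases lt_or_gt_of_ne hxy with h | h
  · rw [min_eq_left h.le]
    exact refined_aux_s10 p hp x y hx hy h
  · rw [min_eq_right h.le]
    have := refined_aux_s10 p hp y x hy hx h
    rw [norm_sub_rev _ (‖x‖ ^ (p - 1) • x), norm_sub_rev y x, add_comm (‖y‖ ^ p),
      add_comm ‖y‖, ← neg_sub (‖y‖ ^ p), ← neg_sub ‖y‖ ‖x‖, neg_div_neg_eq] at this
    exact this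
end

section
/- Let X be a real normed linear space and let x, y ∈ X be nonzero. If p ≤ 1, then ‖x‖·‖y‖^{p−1} + ‖x‖^{p−1}·‖y‖ − (‖x‖+‖y‖−‖x−y‖)/(min{‖x‖,‖y‖})^{1−p} ≤ β_p[x,y] ≤ ‖x‖·‖y‖^{p−1} + ‖x‖^{p−1}·‖y‖ − (‖x‖+‖y‖−‖x−y‖)/(max{‖x‖,‖y‖})^{1−p}. If p > 1, these two inequalities hold with reversed inequality signs. -/
noncomputable def betaD {X : Type*} [NormedAddCommGroup X] [NormedSpace ℝ X]
    (p : ℝ) (x y : X) : ℝ :=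
  ‖(‖y‖ ^ (p - 1)) • x - (‖x‖ ^ (p - 1)) • y‖

theorem skew_upper {X : Type*} [NormedAddCommGroup X] [NormedSpace ℝ X]
    (x y : X) (a b c : ℝ) (hc : 0 ≤ c) (ha : c ≤ a) (hb : c ≤ b) :
    ‖a • x - b • y‖ ≤ ‖x‖ * a + b * ‖y‖ - (‖x‖ + ‖y‖ - ‖x - y‖) * c := by
  have e : a • x - b • y = c • (x - y) + (a - c) • x - (b - c) • y := by module
  have h1 := norm_sub_le (c • (x - y) + (a - c) • x) ((b - c) • y)
  have h2 := norm_add_le (c • (x - y)) ((a - c) • x)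
  rw [← e] at h1
  rw [norm_smul_of_nonneg (by linarith)] at h1
  rw [norm_smul_of_nonneg hc, norm_smul_of_nonneg (by linarith)] at h2
  linarith

theorem skew_lower {X : Type*} [NormedAddCommGroup X] [NormedSpace ℝ X]
    (x y : X) (a b c : ℝ) (hc : 0 ≤ c) (ha : a ≤ c) (hb : b ≤ c) :
    ‖x‖ * a + b * ‖y‖ - (‖x‖ + ‖y‖ - ‖x - y‖) * c ≤ ‖a • x - b • y‖ := by
  have e : c • (x - y) = (a • x - b • y) + (c - a) • x - (c - b) • y := by module
  have h1 := norm_sub_le ((a • x - b • y) + (c - a) • x) ((c - b) • y)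
  have h2 := norm_add_le (a • x - b • y) ((c - a) • x)
  rw [← e, norm_smul_of_nonneg hc, norm_smul_of_nonneg (by linarith)] at h1
  rw [norm_smul_of_nonneg (by linarith)] at h2
  linarith

theorem skew_pAngular_bounds
    {X : Type*} [NormedAddCommGroup X] [NormedSpace ℝ X]
    (x y : X) (hx : x ≠ 0) (hy : y ≠ 0) (p : ℝ) :
    (p ≤ 1 →
      ‖x‖ * ‖y‖ ^ (p - 1) + ‖x‖ ^ (p - 1) * ‖y‖
          - (‖x‖ + ‖y‖ - ‖x - y‖) / (min ‖x‖ ‖y‖) ^ (1 - p)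
        ≤ betaD p x y ∧
      betaD p x y
        ≤ ‖x‖ * ‖y‖ ^ (p - 1) + ‖x‖ ^ (p - 1) * ‖y‖
          - (‖x‖ + ‖y‖ - ‖x - y‖) / (max ‖x‖ ‖y‖) ^ (1 - p)) ∧
    (1 < p →
      betaD p x y
        ≤ ‖x‖ * ‖y‖ ^ (p - 1) + ‖x‖ ^ (p - 1) * ‖y‖
          - (‖x‖ + ‖y‖ - ‖x - y‖) / (min ‖x‖ ‖y‖) ^ (1 - p) ∧
      ‖x‖ * ‖y‖ ^ (p - 1) + ‖x‖ ^ (p - 1) * ‖y‖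
          - (‖x‖ + ‖y‖ - ‖x - y‖) / (max ‖x‖ ‖y‖) ^ (1 - p)
        ≤ betaD p x y) := by
  have hx0 : 0 < ‖x‖ := norm_pos_iff.mpr hx
  have hy0 : 0 < ‖y‖ := norm_pos_iff.mpr hy
  have hm : 0 < min ‖x‖ ‖y‖ := lt_min hx0 hy0
  have hM : 0 < max ‖x‖ ‖y‖ := lt_max_of_lt_left hx0
  have key : ∀ D m : ℝ, 0 < m → D / m ^ (1 - p) = D * m ^ (p - 1) := by
    intro D m h
    rw [show p - 1 = -(1 - p) by ring, Real.rpow_neg h.le, div_eq_mul_inv]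
  rw [key _ _ hm, key _ _ hM]
  unfold betaD
  refine ⟨fun hp => ⟨?_, ?_⟩, fun hp => ⟨?_, ?_⟩⟩
  · exact skew_lower x y _ _ _ (by positivity)
      (Real.rpow_le_rpow_of_nonpos hm (min_le_right _ _) (by linarith))
      (Real.rpow_le_rpow_of_nonpos hm (min_le_left _ _) (by linarith))
  · exact skew_upper x y _ _ _ (by positivity)
      (Real.rpow_le_rpow_of_nonpos hy0 (le_max_right _ _) (by linarith))
      (Real.rpow_le_rpow_of_nonpos hx0 (le_max_left _ _) (by linarith))
  · exact skew_upper x y _ _ _ (by positivity)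
      (Real.rpow_le_rpow hm.le (min_le_right _ _) (by linarith))
      (Real.rpow_le_rpow hm.le (min_le_left _ _) (by linarith))
  · exact skew_lower x y _ _ _ (by positivity)
      (Real.rpow_le_rpow hy0.le (le_max_right _ _) (by linarith))
      (Real.rpow_le_rpow hx0.le (le_max_left _ _) (by linarith))
end

section
/- Let X be a real inner product space. Then for every p ∈ ℝ and all nonzero vectors x, y ∈ X: α_p[x,y]² = (‖x‖^p − ‖y‖^p)² + ‖x‖^p·‖y‖^p·α[x,y]², where moreover α[x,y]² = (‖x−y‖² − (‖x‖−‖y‖)²)/(‖x‖·‖y‖). -/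
noncomputable def angularD {X : Type*} [NormedAddCommGroup X] [NormedSpace ℝ X]
    (x y : X) : ℝ :=
  ‖‖x‖⁻¹ • x - ‖y‖⁻¹ • y‖

theorem pAngular_identity_inner
    {X : Type*} [NormedAddCommGroup X] [InnerProductSpace ℝ X]
    (p : ℝ) (x y : X) (hx : x ≠ 0) (hy : y ≠ 0) :
    (alphaD p x y) ^ 2
        = (‖x‖ ^ p - ‖y‖ ^ p) ^ 2 + ‖x‖ ^ p * ‖y‖ ^ p * (angularD x y) ^ 2 ∧
      (angularD x y) ^ 2
        = (‖x - y‖ ^ 2 - (‖x‖ - ‖y‖) ^ 2) / (‖x‖ * ‖y‖) := by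
  have hx' : 0 < ‖x‖ := norm_pos_iff.mpr hx
  have hy' : 0 < ‖y‖ := norm_pos_iff.mpr hy
  have key : ∀ a b : ℝ, ‖a • x - b • y‖ ^ 2
      = a ^ 2 * ‖x‖ ^ 2 - 2 * (a * b * inner ℝ x y) + b ^ 2 * ‖y‖ ^ 2 := by
    intro a b
    rw [norm_sub_sq_real, norm_smul, norm_smul, real_inner_smul_left, real_inner_smul_right,
      mul_pow, mul_pow, Real.norm_eq_abs, Real.norm_eq_abs, sq_abs, sq_abs]
    ring
  unfold alphaD angularD
  rw [key, key, norm_sub_sq_real, Real.rpow_sub_one hx'.ne', Real.rpow_sub_one hy'.ne']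
  constructor
  · field_simp
    ring
  · field_simp
    ring
end

section
/- Let X be a real inner product space and let p, q ∈ ℝ with |p| ≥ |q|. Then for all nonzero vectors x, y ∈ X: α_p[x,y] ≥ ((‖x‖^p + ‖y‖^p)/(‖x‖^q + ‖y‖^q))·α_q[x,y]. -/
theorem pAngular_aux_s14 (p l m : ℝ) :
    Real.exp (l * p) ^ 2 + Real.exp (m * p) ^ 2
      = 2 * Real.cosh (p * (l - m)) * (Real.exp (l * p) * Real.exp (m * p)) := by
  rw [Real.cosh_eq, show p * (l - m) = l * p - m * p by ring, neg_sub, Real.exp_sub, Real.exp_sub]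
  have := Real.exp_pos (l * p)
  have := Real.exp_pos (m * p)
  field_simp

theorem pAngular_smul {X : Type*} [NormedAddCommGroup X] [InnerProductSpace ℝ X]
    (p : ℝ) (x : X) (hx : x ≠ 0) :
    (‖x‖ ^ (p - 1)) • x = (‖x‖ ^ p) • (‖x‖⁻¹ • x) := by
  rw [smul_smul, Real.rpow_sub_one (norm_ne_zero_iff.2 hx), div_eq_mul_inv]

theorem pAngular_sq {X : Type*} [NormedAddCommGroup X] [InnerProductSpace ℝ X]
    (A B : ℝ) (u v : X) (hu : ‖u‖ = 1) (hv : ‖v‖ = 1) :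
    ‖A • u - B • v‖ ^ 2 = A ^ 2 + B ^ 2 - 2 * A * B * inner ℝ u v := by
  rw [norm_sub_sq_real, norm_smul, norm_smul, hu, hv, inner_smul_left, inner_smul_right]
  simp
  ring

theorem pAngular_ratio_inner
    {X : Type*} [NormedAddCommGroup X] [InnerProductSpace ℝ X]
    (p q : ℝ) (hpq : |q| ≤ |p|) (x y : X) (hx : x ≠ 0) (hy : y ≠ 0) :
    alphaD p x y
      ≥ ((‖x‖ ^ p + ‖y‖ ^ p) / (‖x‖ ^ q + ‖y‖ ^ q)) * alphaD q x y := by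
  have ha := norm_pos_iff.2 hx
  have hb := norm_pos_iff.2 hy
  unfold alphaD
  simp only [pAngular_smul _ x hx, pAngular_smul _ y hy]
  have hu : ‖(‖x‖⁻¹ • x)‖ = 1 := by
    rw [norm_smul, norm_inv, norm_norm, inv_mul_cancel₀ ha.ne']
  have hv : ‖(‖y‖⁻¹ • y)‖ = 1 := by
    rw [norm_smul, norm_inv, norm_norm, inv_mul_cancel₀ hb.ne']
  generalize ‖x‖⁻¹ • x = u at *
  generalize ‖y‖⁻¹ • y = v at *
  have hc : -1 ≤ inner ℝ u v := by
    have h := abs_real_inner_le_norm u v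
    rw [hu, hv, mul_one] at h
    exact (abs_le.1 h).1
  simp only [Real.rpow_def_of_pos ha, Real.rpow_def_of_pos hb]
  have h1 := pAngular_aux_s14 p (Real.log ‖x‖) (Real.log ‖y‖)
  have h2 := pAngular_aux_s14 q (Real.log ‖x‖) (Real.log ‖y‖)
  have hch : Real.cosh (q * (Real.log ‖x‖ - Real.log ‖y‖))
      ≤ Real.cosh (p * (Real.log ‖x‖ - Real.log ‖y‖)) := by
    rw [Real.cosh_le_cosh, abs_mul, abs_mul]
    gcongr
  generalize Real.cosh (q * (Real.log ‖x‖ - Real.log ‖y‖)) = k at *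
  generalize Real.cosh (p * (Real.log ‖x‖ - Real.log ‖y‖)) = K at *
  have hA := Real.exp_pos (Real.log ‖x‖ * p)
  have hB := Real.exp_pos (Real.log ‖y‖ * p)
  have hC := Real.exp_pos (Real.log ‖x‖ * q)
  have hD := Real.exp_pos (Real.log ‖y‖ * q)
  generalize Real.exp (Real.log ‖x‖ * p) = A at *
  generalize Real.exp (Real.log ‖y‖ * p) = B at *
  generalize Real.exp (Real.log ‖x‖ * q) = C at *
  generalize Real.exp (Real.log ‖y‖ * q) = D at *
  rw [ge_iff_le, div_mul_eq_mul_div, div_le_iff₀ (by positivity)]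
  refine (pow_le_pow_iff_left₀ (by positivity) (by positivity) two_ne_zero).1 ?_
  rw [mul_pow, mul_pow, pAngular_sq _ _ _ _ hu hv, pAngular_sq _ _ _ _ hu hv]
  generalize inner ℝ u v = c at *
  have key : 0 ≤ 2 * (1 + c) * (C * D * (A ^ 2 + B ^ 2) - A * B * (C ^ 2 + D ^ 2)) := by
    rw [h1, h2]
    have e : C * D * (2 * K * (A * B)) - A * B * (2 * k * (C * D))
        = 2 * (A * B * C * D) * (K - k) := by ring
    rw [e]
    have : 0 ≤ K - k := by linarith
    have : 0 ≤ 1 + c := by linarith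
    positivity
  nlinarith [key]
end

section
/- Let X be a real normed linear space and let p, q ∈ ℝ with |p| ≥ |q| and p ≠ q. If for all nonzero vectors x, y ∈ X the inequality α_p[x,y] ≥ ((‖x‖^p + ‖y‖^p)/(‖x‖^q + ‖y‖^q))·α_q[x,y] holds, then X is an inner product space, i.e., the norm of X satisfies the parallelogram law ‖x+y‖² + ‖x−y‖² = 2‖x‖² + 2‖y‖² for all x, y ∈ X. -/
section Helpers

variable {X : Type*} [NormedAddCommGroup X] [NormedSpace ℝ X]

/-- Isosceles implies Birkhoff, on pairs of vectors of the same norm. -/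
def PropP (X : Type*) [NormedAddCommGroup X] [NormedSpace ℝ X] : Prop :=
  ∀ u v : X, ‖u‖ = ‖v‖ → ∀ s : ℝ, ‖u + v‖ ≤ ‖(u + v) + s • (u - v)‖

lemma alpha_exp (p θ : ℝ) (u v : X) (hu : ‖u‖ = 1) (hv : ‖v‖ = 1) :
    alphaD p (Real.exp θ • u) v = ‖Real.exp (p * θ) • u - v‖ := by
  unfold alphaD
  rw [norm_smul, hu, hv, Real.norm_of_nonneg (Real.exp_pos θ).le, mul_one, Real.one_rpow, one_smul,
    smul_smul, ← Real.exp_mul, ← Real.exp_add]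
  congr 4
  ring

noncomputable def GG (u v : X) (t : ℝ) : ℝ := ‖Real.exp t • u - v‖ / (Real.exp t + 1)

lemma GG_neg (u v : X) (t : ℝ) : GG u v (-t) = ‖u - Real.exp t • v‖ / (Real.exp t + 1) := by
  unfold GG
  have e : Real.exp t * Real.exp (-t) = 1 := by rw [← Real.exp_add]; simp
  have h1 : u - Real.exp t • v = Real.exp t • (Real.exp (-t) • u - v) := by
    rw [smul_sub, smul_smul, e, one_smul]
  rw [h1, norm_smul, Real.norm_of_nonneg (Real.exp_pos t).le]
  have := Real.exp_pos t
  have := Real.exp_pos (-t)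
  rw [div_eq_div_iff (by positivity) (by positivity)]
  linear_combination (-‖Real.exp (-t) • u - v‖) * e

lemma GG_mono {p q : ℝ} (h : ∀ x y : X, x ≠ 0 → y ≠ 0 →
      alphaD p x y ≥ ((‖x‖ ^ p + ‖y‖ ^ p) / (‖x‖ ^ q + ‖y‖ ^ q)) * alphaD q x y)
    (u v : X) (hu : ‖u‖ = 1) (hv : ‖v‖ = 1) (θ : ℝ) : GG u v (q * θ) ≤ GG u v (p * θ) := by
  have hu0 : u ≠ 0 := by rintro rfl; simp at hu
  have hv0 : v ≠ 0 := by rintro rfl; simp at hv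
  have := h (Real.exp θ • u) v (smul_ne_zero (Real.exp_pos θ).ne' hu0) hv0
  rw [alpha_exp p θ u v hu hv, alpha_exp q θ u v hu hv, norm_smul, hu, hv,
    Real.norm_of_nonneg (Real.exp_pos θ).le, mul_one, Real.one_rpow, Real.one_rpow,
    ← Real.exp_mul, ← Real.exp_mul, mul_comm θ p, mul_comm θ q] at this
  unfold GG
  have e1 := Real.exp_pos (p * θ)
  have e2 := Real.exp_pos (q * θ)
  rw [le_div_iff₀ (by positivity)]
  calc _ = _ := by ring
    _ ≤ _ := this

lemma GG_min {p q : ℝ} (hpq : |q| ≤ |p|) (hne : p ≠ q) (h : ∀ x y : X, x ≠ 0 → y ≠ 0 →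
      alphaD p x y ≥ ((‖x‖ ^ p + ‖y‖ ^ p) / (‖x‖ ^ q + ‖y‖ ^ q)) * alphaD q x y)
    (u v : X) (hu : ‖u‖ = 1) (hv : ‖v‖ = 1) (t : ℝ) : GG u v 0 ≤ GG u v t := by
  have hp : p ≠ 0 := by
    rintro rfl
    simp at hpq
    exact hne hpq.symm
  have hG : ∀ t, GG u v (q / p * t) ≤ GG u v t := by
    intro t
    have := GG_mono h u v hu hv (t / p)
    rwa [mul_div_cancel₀ t hp, show q * (t / p) = q / p * t by ring] at this
  rcases hpq.lt_or_eq with hlt | heq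
  · have hk : |q / p| < 1 := by
      rw [abs_div, div_lt_one (abs_pos.mpr hp)]; exact hlt
    have hit : ∀ n : ℕ, GG u v ((q / p) ^ n * t) ≤ GG u v t := by
      intro n
      induction n with
      | zero => simp
      | succ n ih =>
        refine le_trans ?_ ih
        rw [pow_succ', mul_assoc]
        exact hG _
    have hc : Continuous (GG u v) := by
      unfold GG
      refine Continuous.div (by fun_prop) (by fun_prop) ?_
      intro x
      have := Real.exp_pos x
      positivity
    have hl : Filter.Tendsto (fun n : ℕ => (q / p) ^ n * t) Filter.atTop (nhds 0) := by
      have := (tendsto_pow_atTop_nhds_zero_of_abs_lt_one hk).mul_const t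
      simpa using this
    exact le_of_tendsto ((hc.tendsto 0).comp hl) (Filter.Eventually.of_forall hit)
  · have hq : q = -p := by
      rcases abs_eq_abs.mp heq with h1 | h1
      · exact absurd h1.symm hne
      · exact h1
    have hk : q / p = -1 := by rw [hq]; field_simp
    have h1 := hG t
    rw [hk, neg_one_mul] at h1
    have h2 : 2 * GG u v 0 ≤ GG u v t + GG u v (-t) := by
      rw [GG_neg]
      unfold GG
      have e := Real.exp_pos t
      rw [← add_div, le_div_iff₀ (by positivity)]
      have h3 : (Real.exp t • u - v) + (u - Real.exp t • v) = (Real.exp t + 1) • (u - v) := by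
        module
      have h4 := norm_add_le (Real.exp t • u - v) (u - Real.exp t • v)
      rw [h3, norm_smul, Real.norm_of_nonneg (by positivity)] at h4
      simp only [Real.exp_zero, one_smul]
      linarith
    linarith

lemma propP_of (hG : ∀ (u v : X), ‖u‖ = 1 → ‖v‖ = 1 → ∀ t : ℝ, GG u v 0 ≤ GG u v t) :
    PropP X := by
  have key : ∀ (u v : X), ‖u‖ = 1 → ‖v‖ = 1 → ∀ s : ℝ,
      ‖u + v‖ ≤ ‖(u + v) + s • (u - v)‖ := by
    intro u v hu hv s
    have e : (u + v) + s • (u - v) = (1 + s) • u + (1 - s) • v := by module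
    have h2 : ‖u + v‖ ≤ 2 := by
      have := norm_add_le u v
      linarith
    rw [e]
    rcases le_or_gt 1 s with h1 | h1
    · have := norm_sub_norm_le ((1 + s) • u) (-((1 - s) • v))
      rw [sub_neg_eq_add, norm_neg, norm_smul, norm_smul, hu, hv, Real.norm_eq_abs,
        Real.norm_eq_abs, abs_of_nonneg (by linarith), abs_of_nonpos (by linarith)] at this
      linarith
    rcases le_or_gt s (-1) with h3 | h3
    · have := norm_sub_norm_le ((1 - s) • v) (-((1 + s) • u))
      rw [sub_neg_eq_add, norm_neg, norm_smul, norm_smul, hu, hv, Real.norm_eq_abs,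
        Real.norm_eq_abs, abs_of_nonneg (by linarith), abs_of_nonpos (by linarith),
        add_comm ((1 - s) • v)] at this
      linarith
    have hs : 0 < 1 - s := by linarith
    have ha : 0 < (1 + s) / (1 - s) := div_pos (by linarith) hs
    have := hG u (-v) hu (by rwa [norm_neg]) (Real.log ((1 + s) / (1 - s)))
    unfold GG at this
    rw [Real.exp_log ha, Real.exp_zero, one_smul, sub_neg_eq_add, sub_neg_eq_add,
      le_div_iff₀ (by positivity)] at this
    have e2 : (1 + s) • u + (1 - s) • v = (1 - s) • (((1 + s) / (1 - s)) • u + v) := by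
      rw [smul_add, smul_smul, mul_div_cancel₀ _ hs.ne']
    rw [e2, norm_smul, Real.norm_of_nonneg hs.le]
    have e3 : (1 + s) / (1 - s) + 1 = 2 / (1 - s) := by field_simp; ring
    rw [e3] at this
    calc ‖u + v‖ = (1 - s) * (‖u + v‖ / (1 + 1) * (2 / (1 - s))) := by field_simp; ring
      _ ≤ _ := by gcongr
  intro u v huv s
  rcases eq_or_ne u 0 with rfl | hu
  · have : v = 0 := by simpa using huv.symm
    simp [this]
  have hn : 0 < ‖u‖ := norm_pos_iff.mpr hu
  have := key (‖u‖⁻¹ • u) (‖u‖⁻¹ • v) (by rw [norm_smul, norm_inv, norm_norm]; field_simp)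
    (by rw [norm_smul, norm_inv, norm_norm, ← huv]; field_simp) s
  have e1 : ‖u‖⁻¹ • u + ‖u‖⁻¹ • v = ‖u‖⁻¹ • (u + v) := by module
  have e2 : ‖u‖⁻¹ • (u + v) + s • (‖u‖⁻¹ • u - ‖u‖⁻¹ • v) = ‖u‖⁻¹ • (u + v + s • (u - v)) := by
    module
  rw [e1, e2, norm_smul, norm_smul] at this
  exact le_of_mul_le_mul_left this (by rw [norm_inv, norm_norm]; positivity)

/-- Birkhoff orthogonality. -/
def Bk (y x : X) : Prop := ∀ t : ℝ, ‖y‖ ≤ ‖y + t • x‖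

lemma Bk.smul {y x : X} (h : Bk y x) (c : ℝ) : Bk (c • y) x := by
  intro t
  rcases eq_or_ne c 0 with rfl | hc
  · simp
  have e : c • y + t • x = c • (y + (t / c) • x) := by
    rw [smul_add, smul_smul, mul_div_cancel₀ _ hc]
  rw [e, norm_smul, norm_smul]
  exact mul_le_mul_of_nonneg_left (h _) (norm_nonneg _)

lemma Bk.smul_right {y x : X} (h : Bk y x) (c : ℝ) : Bk y (c • x) := by
  intro t
  rw [smul_smul]
  exact h _

lemma bk_of_iso (P : PropP X) {y x : X} (h : ‖y + x‖ = ‖y - x‖) : Bk y x := by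
  intro t
  have := P (y + x) (y - x) h t
  have e1 : y + x + (y - x) = (2 : ℝ) • y := by module
  have e2 : (2 : ℝ) • y + t • (y + x - (y - x)) = (2 : ℝ) • (y + t • x) := by module
  rw [e1, e2, norm_smul, norm_smul] at this
  exact le_of_mul_le_mul_left this (by norm_num)

lemma norm_line_large (y x : X) (t : ℝ) : |t| * ‖x‖ - ‖y‖ ≤ ‖y + t • x‖ := by
  have := norm_sub_norm_le (t • x) (-y)
  rw [norm_neg, norm_smul, Real.norm_eq_abs, sub_neg_eq_add, add_comm (t • x)] at this
  exact this

lemma bk_unique_pos (P : PropP X) {y x : X} (hx : x ≠ 0) {m : ℝ} (hm : 0 < m)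
    (h : Bk y x) (hle : ‖y + m • x‖ ≤ ‖y‖) : False := by
  have hxp : 0 < ‖x‖ := norm_pos_iff.mpr hx
  have hyp : 0 < ‖y‖ := by
    rw [norm_pos_iff]
    rintro rfl
    rw [zero_add, norm_smul, norm_zero, Real.norm_of_nonneg hm.le] at hle
    have : 0 < m * ‖x‖ := by positivity
    linarith
  set S : Set ℝ := {s | ‖y + s • x‖ ≤ ‖y‖} with hS
  have hSc : IsClosed S := isClosed_le (by fun_prop) (by fun_prop)
  have hSb : BddAbove S := by
    refine ⟨2 * ‖y‖ / ‖x‖, ?_⟩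
    intro s hs
    have h1 := norm_line_large y x s
    have h2 : ‖y + s • x‖ ≤ ‖y‖ := hs
    rw [le_div_iff₀ hxp]
    have := mul_le_mul_of_nonneg_right (le_abs_self s) hxp.le
    linarith
  have hmS : m ∈ S := hle
  set β := sSup S
  have hβS : β ∈ S := hSc.csSup_mem ⟨m, hmS⟩ hSb
  have hβm : m ≤ β := le_csSup hSb hmS
  have hβ : 0 < β := lt_of_lt_of_le hm hβm
  have hβn : ‖y + β • x‖ ≤ ‖y‖ := hβS
  -- flatness on the segment
  have flat : ∀ s, 0 ≤ s → s ≤ β → ‖y + s • x‖ ≤ ‖y‖ := by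
    intro s h0 h1
    have e : y + s • x = (1 - s / β) • y + (s / β) • (y + β • x) := by
      rw [smul_add, smul_smul, div_mul_cancel₀ _ hβ.ne']
      module
    have hs1 : s / β ≤ 1 := (div_le_one hβ).mpr h1
    have hs0 : 0 ≤ s / β := by positivity
    rw [e]
    refine (norm_add_le _ _).trans ?_
    rw [norm_smul, norm_smul, Real.norm_of_nonneg (by linarith), Real.norm_of_nonneg hs0]
    have := mul_le_mul_of_nonneg_left hβn hs0
    linarith
  have hbig : ‖y‖ < ‖y + (3 / 2 * β) • x‖ := by
    by_contra hcon
    push Not at hcon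
    have : 3 / 2 * β ≤ β := le_csSup hSb hcon
    linarith
  set c := ‖y + (3 / 2 * β) • x‖ / ‖y‖ with hc
  have hc1 : 1 < c := (one_lt_div hyp).mpr hbig
  have hc0 : 0 < c := by linarith
  set v := c⁻¹ • (y + (3 / 2 * β) • x) with hv
  have hvn : ‖y‖ = ‖v‖ := by
    rw [hv, norm_smul, norm_inv, Real.norm_of_nonneg hc0.le]
    have : ‖y + (3 / 2 * β) • x‖ = c * ‖y‖ := by rw [hc]; field_simp
    rw [this]; field_simp
  have hP := P y v hvn
  -- coordinates: y+v = A y + B x,  y - v = C y - B x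
  set A := 1 + c⁻¹ with hA
  set B := c⁻¹ * (3 / 2 * β) with hB
  set C := 1 - c⁻¹ with hC
  have hci : c⁻¹ < 1 := inv_lt_one_of_one_lt₀ hc1
  have hcp : 0 < c⁻¹ := by positivity
  have hApos : 0 < A := by linarith
  have hBpos : 0 < B := by positivity
  have hCpos : 0 < C := by linarith
  have hBA : B < A * β := by
    rw [hB, hA]
    nlinarith
  have hyv : y + v = A • y + B • x := by rw [hv, hA, hB]; module
  have hyv2 : y - v = C • y - B • x := by rw [hv, hC, hB]; module
  have hlow : A * ‖y‖ ≤ ‖y + v‖ := by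
    have := (h.smul A) B
    rw [norm_smul, Real.norm_of_nonneg hApos.le, ← hyv] at this
    exact this
  -- choose small ε
  obtain ⟨ε, hε, h1, h2⟩ : ∃ ε : ℝ, 0 < ε ∧ 0 < A - ε * C ∧ B + ε * B ≤ (A - ε * C) * β := by
    set D := B + C * β with hD
    have hDp : 0 < D := by positivity
    refine ⟨(A * β - B) / D, div_pos (by linarith) hDp, ?_, ?_⟩
    · have e : A * D - (A * β - B) * C > 0 := by
        rw [hD]
        have : A - C > 0 := by rw [hA, hC]; linarith
        have : A * (B + C * β) - (A * β - B) * C = A * B + B * C := by ring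
        rw [this]; positivity
      have : A - (A * β - B) / D * C = (A * D - (A * β - B) * C) / D := by field_simp
      rw [this]
      exact div_pos e hDp
    · have : (A * β - B) / D * D = A * β - B := by field_simp
      rw [hD] at this
      rw [hD]
      linarith
  have := hP (-ε)
  rw [hyv2] at this
  have e : y + v + (-ε) • (C • y - B • x)
      = (A - ε * C) • (y + ((B + ε * B) / (A - ε * C)) • x) := by
    rw [hyv, smul_add, smul_smul (A - ε * C), mul_div_cancel₀ _ h1.ne']
    module
  rw [e, norm_smul, Real.norm_of_nonneg h1.le] at this
  have h3 := flat ((B + ε * B) / (A - ε * C)) (by positivity) (by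
    rw [div_le_iff₀ h1]; linarith)
  have h4 := mul_le_mul_of_nonneg_left h3 h1.le
  have h5 : 0 < ε * C * ‖y‖ := by positivity
  nlinarith

lemma bk_unique (P : PropP X) {y x : X} (hx : x ≠ 0) {m : ℝ}
    (h : Bk y x) (h' : Bk (y + m • x) x) : m = 0 := by
  have hle : ‖y + m • x‖ ≤ ‖y‖ := by
    have := h' (-m)
    rwa [show y + m • x + (-m) • x = y by module] at this
  rcases lt_trichotomy m 0 with hm | hm | hm
  · exfalso
    refine bk_unique_pos P (neg_ne_zero.mpr hx) (neg_pos.mpr hm) (y := y) ?_ ?_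
    · have := h.smul_right (-1)
      rwa [neg_one_smul] at this
    · rwa [neg_smul_neg]
  · exact hm
  · exact (bk_unique_pos P hx hm h hle).elim

lemma exists_neg_same (y x : X) (hx : x ≠ 0) (h : Bk y x) (t : ℝ) (ht : 0 < t) :
    ∃ s : ℝ, ‖y + s • x‖ = ‖y + t • x‖ ∧ s ≤ 0 := by
  have hxp : 0 < ‖x‖ := norm_pos_iff.mpr hx
  set R := (‖y‖ + ‖y + t • x‖) / ‖x‖ with hR
  have hR0 : 0 ≤ R := by positivity
  have hc : ContinuousOn (fun s : ℝ => ‖y + s • x‖) (Set.Icc (-R) 0) := by fun_prop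
  have := intermediate_value_Icc' (by linarith) hc
  have hmem : ‖y + t • x‖ ∈ Set.Icc (‖y + (0:ℝ) • x‖) (‖y + (-R) • x‖) := by
    constructor
    · simpa using h t
    · have h1 := norm_line_large y x (-R)
      rw [abs_neg, abs_of_nonneg hR0] at h1
      have : R * ‖x‖ = ‖y‖ + ‖y + t • x‖ := by rw [hR]; field_simp
      linarith
  obtain ⟨s, hs, hs2⟩ := this hmem
  exact ⟨s, hs2, hs.2⟩

lemma bk_symm_norm (P : PropP X) {y x : X} (h : Bk y x) (t : ℝ) :
    ‖y + t • x‖ = ‖y - t • x‖ := by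
  rcases eq_or_ne x 0 with rfl | hx
  · simp
  have key : ∀ t : ℝ, 0 < t → ‖y + t • x‖ = ‖y - t • x‖ := by
    intro t ht
    obtain ⟨s, hs, hs0⟩ := exists_neg_same y x hx h t ht
    have hb : Bk (y + ((t + s) / 2) • x) (((t - s) / 2) • x) := by
      apply bk_of_iso P
      rw [show y + ((t + s) / 2) • x + ((t - s) / 2) • x = y + t • x by module,
        show y + ((t + s) / 2) • x - ((t - s) / 2) • x = y + s • x by module, hs]
    have hb2 := hb.smul_right (((t - s) / 2)⁻¹)
    rw [smul_smul, inv_mul_cancel₀ (by linarith), one_smul] at hb2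
    have := bk_unique P hx h hb2
    have hst : s = -t := by linarith
    rw [← hs, hst, neg_smul, sub_eq_add_neg]
  rcases lt_trichotomy t 0 with ht | rfl | ht
  · have := key (-t) (by linarith)
    rw [neg_smul, sub_neg_eq_add, ← sub_eq_add_neg] at this
    exact this.symm
  · simp
  · exact key t ht

lemma ficken (P : PropP X) {x y : X} (h : ‖x‖ = ‖y‖) (a b : ℝ) :
    ‖a • x + b • y‖ = ‖b • x + a • y‖ := by
  have hb : Bk (x + y) (x - y) := P x y h
  have h1 := bk_symm_norm P (hb.smul ((a + b) / 2)) ((a - b) / 2)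
  rw [show ((a + b) / 2) • (x + y) + ((a - b) / 2) • (x - y) = a • x + b • y by module,
    show ((a + b) / 2) • (x + y) - ((a - b) / 2) • (x - y) = b • x + a • y by module] at h1
  exact h1

lemma unit_circle (P : PropP X) {u v : X} (hu : ‖u‖ = 1) (hv : ‖v‖ = 1)
    (E : ∀ a b : ℝ, ‖a • u + b • v‖ = ‖a • u - b • v‖) (a b : ℝ)
    (hw : ‖a • u + b • v‖ = 1) : a ^ 2 + b ^ 2 = 1 := by
  rcases eq_or_ne a 0 with rfl | ha
  · rw [zero_smul, zero_add, norm_smul, hv, mul_one, Real.norm_eq_abs] at hw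
    rw [← sq_abs b, hw]; norm_num
  rcases eq_or_ne b 0 with rfl | hb
  · rw [zero_smul, add_zero, norm_smul, hu, mul_one, Real.norm_eq_abs] at hw
    rw [← sq_abs a, hw]; norm_num
  set w := a • u + b • v with hwdef
  have hw0 : w ≠ 0 := by
    intro h0
    rw [h0] at hw
    simp at hw
  have hD : 0 < a ^ 2 + b ^ 2 := by positivity
  have h1 : Bk ((-b) • u + a • v) w := by
    apply bk_of_iso P
    rw [show (-b) • u + a • v + w = (a - b) • u + (a + b) • v by rw [hwdef]; module,
      show (-b) • u + a • v - w = -((a + b) • u - (a - b) • v) by rw [hwdef]; module,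
      norm_neg, ← E (a + b) (a - b)]
    exact ficken P (hu.trans hv.symm) _ _
  have hvw : v = (-(a / b)) • u + (1 / b) • w := by
    rw [hwdef, smul_add, smul_smul, smul_smul, one_div_mul_cancel hb]
    module
  have hT : ∀ t : ℝ, ‖w + t • ((1 / b) • u - (a / b) • w)‖ = ‖u + t • v‖ := by
    intro t
    have := ficken P (hu.trans hw.symm) (1 - t * (a / b)) (t * (1 / b))
    rw [hvw, show u + t • ((-(a / b)) • u + (1 / b) • w)
      = (1 - t * (a / b)) • u + (t * (1 / b)) • w by module, this]
    congr 1
    module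
  have h2 : Bk ((-1 : ℝ) • ((1 / b) • u - (a / b) • w)) w := by
    apply Bk.smul
    apply bk_of_iso P
    have e1 := hT 1
    have e2 := hT (-1)
    have e3 := E 1 1
    simp only [one_smul, neg_smul] at e1 e2 e3
    rw [add_comm, e1, e3, norm_sub_rev _ w, sub_eq_add_neg w, e2, sub_eq_add_neg]
  have h3 := h1.smul (1 / (a ^ 2 + b ^ 2))
  have e : (-1 : ℝ) • ((1 / b) • u - (a / b) • w)
      = (1 / (a ^ 2 + b ^ 2)) • ((-b) • u + a • v)
        + (a * (a ^ 2 + b ^ 2 - 1) / (b * (a ^ 2 + b ^ 2))) • w := by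
    rw [hwdef]
    match_scalars
    · field_simp
      ring
    · field_simp
      ring
  rw [e] at h2
  have h4 := bk_unique P hw0 h3 h2
  rw [div_eq_zero_iff] at h4
  rcases h4 with h4 | h4
  · rcases mul_eq_zero.mp h4 with h5 | h5
    · exact absurd h5 ha
    · linarith
  · exact absurd h4 (by positivity)

lemma norm_sq_comb (P : PropP X) {u v : X} (hu : ‖u‖ = 1) (hv : ‖v‖ = 1)
    (E : ∀ a b : ℝ, ‖a • u + b • v‖ = ‖a • u - b • v‖) (a b : ℝ) :
    ‖a • u + b • v‖ ^ 2 = a ^ 2 + b ^ 2 := by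
  rcases eq_or_ne (‖a • u + b • v‖) 0 with h0 | h0
  · have h0' : ‖a • u - b • v‖ = 0 := by rw [← E]; exact h0
    have e1 := norm_eq_zero.mp h0
    have e2 := norm_eq_zero.mp h0'
    have ha : a = 0 := by
      have : (2 * a) • u = 0 := by
        rw [show (2 * a) • u = (a • u + b • v) + (a • u - b • v) by module, e1, e2, add_zero]
      rcases smul_eq_zero.mp this with h | h
      · linarith
      · rw [h] at hu; simp at hu
    have hb : b = 0 := by
      rw [ha, zero_smul, zero_add] at e1
      rcases smul_eq_zero.mp e1 with h | h
      · exact h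
      · rw [h] at hv; simp at hv
    rw [h0, ha, hb]; norm_num
  · set c := ‖a • u + b • v‖ with hc
    have := unit_circle P hu hv E (c⁻¹ * a) (c⁻¹ * b) (by
      rw [mul_smul, mul_smul, ← smul_add, norm_smul, ← hc, norm_inv, hc, norm_norm, ← hc]
      exact inv_mul_cancel₀ h0)
    field_simp at this
    linarith

lemma exists_bk (y x : X) (hx : x ≠ 0) : ∃ t : ℝ, Bk (y + t • x) x := by
  have hxp : 0 < ‖x‖ := norm_pos_iff.mpr hx
  have hc : Continuous (fun s : ℝ => ‖y + s • x‖) := by fun_prop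
  set R := 2 * ‖y‖ / ‖x‖ with hR
  have hR0 : 0 ≤ R := by positivity
  have hRx : R * ‖x‖ = 2 * ‖y‖ := by rw [hR]; field_simp
  obtain ⟨t, -, ht⟩ := (isCompact_Icc (a := -R) (b := R)).exists_isMinOn
    ⟨0, by constructor <;> linarith⟩ hc.continuousOn
  have ht' : ∀ s ∈ Set.Icc (-R) R, ‖y + t • x‖ ≤ ‖y + s • x‖ := fun s hs => ht hs
  refine ⟨t, fun s => ?_⟩
  rw [show y + t • x + s • x = y + (t + s) • x by module]
  by_cases hm : t + s ∈ Set.Icc (-R) R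
  · exact ht' _ hm
  · have h0 := ht' 0 (by constructor <;> linarith)
    rw [zero_smul, add_zero] at h0
    have h1 : R < |t + s| := by
      by_contra hcon
      push Not at hcon
      exact hm (abs_le.mp hcon)
    have h2 := norm_line_large y x (t + s)
    have h3 := mul_le_mul_of_nonneg_right h1.le hxp.le
    linarith

lemma parallelogram_of (P : PropP X) (x y : X) :
    ‖x + y‖ ^ 2 + ‖x - y‖ ^ 2 = 2 * ‖x‖ ^ 2 + 2 * ‖y‖ ^ 2 := by
  rcases eq_or_ne x 0 with rfl | hx
  · simp; ring
  obtain ⟨t, ht⟩ := exists_bk y x hx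
  have hxp : ‖x‖ ≠ 0 := norm_ne_zero_iff.mpr hx
  rcases eq_or_ne (y + t • x) 0 with h0 | h0
  · have hy : y = (-t) • x := by rw [neg_smul]; exact eq_neg_of_add_eq_zero_left h0
    rw [hy, show x + (-t) • x = (1 - t) • x by module, show x - (-t) • x = (1 + t) • x by module]
    simp only [norm_smul, mul_pow, Real.norm_eq_abs, sq_abs]
    ring
  set z := y + t • x with hz
  have hzp : ‖z‖ ≠ 0 := norm_ne_zero_iff.mpr h0
  have hu : ‖(‖x‖⁻¹ • x)‖ = 1 := by rw [norm_smul, norm_inv, norm_norm, inv_mul_cancel₀ hxp]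
  have hv : ‖(‖z‖⁻¹ • z)‖ = 1 := by rw [norm_smul, norm_inv, norm_norm, inv_mul_cancel₀ hzp]
  have E : ∀ a b : ℝ, ‖a • (‖x‖⁻¹ • x) + b • (‖z‖⁻¹ • z)‖
      = ‖a • (‖x‖⁻¹ • x) - b • (‖z‖⁻¹ • z)‖ := by
    intro a b
    have := bk_symm_norm P (ht.smul (b * ‖z‖⁻¹)) (a * ‖x‖⁻¹)
    rw [smul_smul, smul_smul, add_comm, this, norm_sub_rev]
  have N := norm_sq_comb P hu hv E
  set u := ‖x‖⁻¹ • x with hudef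
  set v := ‖z‖⁻¹ • z with hvdef
  have ex : x = ‖x‖ • u := by rw [hudef, smul_smul, mul_inv_cancel₀ hxp, one_smul]
  have ez : z = ‖z‖ • v := by rw [hvdef, smul_smul, mul_inv_cancel₀ hzp, one_smul]
  have ey : y = (-t * ‖x‖) • u + ‖z‖ • v := by
    rw [← ez, mul_smul, ← ex, hz]; module
  have n1 : ‖x + y‖ ^ 2 = (‖x‖ - t * ‖x‖) ^ 2 + ‖z‖ ^ 2 := by
    rw [← N]
    congr 2
    rw [sub_smul, mul_smul, ← ex, ← ez, hz]; module
  have n2 : ‖x - y‖ ^ 2 = (‖x‖ + t * ‖x‖) ^ 2 + (-‖z‖) ^ 2 := by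
    rw [← N]
    congr 2
    rw [add_smul, mul_smul, neg_smul, ← ex, ← ez, hz]; module
  have n3 : ‖y‖ ^ 2 = (-t * ‖x‖) ^ 2 + ‖z‖ ^ 2 := by
    rw [← N, ← ey]
  rw [n1, n2, n3]
  ring

end Helpers

theorem pAngular_ratio_characterizes_inner
    {X : Type*} [NormedAddCommGroup X] [NormedSpace ℝ X]
    (p q : ℝ) (hpq : |q| ≤ |p|) (hne : p ≠ q)
    (h : ∀ x y : X, x ≠ 0 → y ≠ 0 →
      alphaD p x y
        ≥ ((‖x‖ ^ p + ‖y‖ ^ p) / (‖x‖ ^ q + ‖y‖ ^ q)) * alphaD q x y) :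
    ∀ x y : X, ‖x + y‖ ^ 2 + ‖x - y‖ ^ 2 = 2 * ‖x‖ ^ 2 + 2 * ‖y‖ ^ 2 := by
  exact parallelogram_of (propP_of (fun u v hu hv t => GG_min hpq hne h u v hu hv t))
end

section
/- Let X be a real inner product space, let p ∈ ℝ, and let x, y ∈ X be nonzero. If α[x,y] ≤ √2, then α_p[x,y] ≥ √((‖x‖^{2p} + ‖y‖^{2p})/2)·α[x,y], while if α[x,y] > √2, then α_p[x,y] ≤ √((‖x‖^{2p} + ‖y‖^{2p})/2)·α[x,y]. -/
theorem pAngular_quadratic_mean_bound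
    {X : Type*} [NormedAddCommGroup X] [InnerProductSpace ℝ X]
    (p : ℝ) (x y : X) (hx : x ≠ 0) (hy : y ≠ 0) :
    (angularD x y ≤ Real.sqrt 2 →
      alphaD p x y
        ≥ Real.sqrt ((‖x‖ ^ (2 * p) + ‖y‖ ^ (2 * p)) / 2) * angularD x y) ∧
    (Real.sqrt 2 < angularD x y →
      alphaD p x y
        ≤ Real.sqrt ((‖x‖ ^ (2 * p) + ‖y‖ ^ (2 * p)) / 2) * angularD x y) := by
  have nx : 0 < ‖x‖ := norm_pos_iff.mpr hx
  have ny : 0 < ‖y‖ := norm_pos_iff.mpr hy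
  obtain ⟨u, hu⟩ : ∃ u, u = ‖x‖⁻¹ • x := ⟨_, rfl⟩
  obtain ⟨v, hv⟩ : ∃ v, v = ‖y‖⁻¹ • y := ⟨_, rfl⟩
  obtain ⟨a, ha⟩ : ∃ a, a = ‖x‖ ^ p := ⟨_, rfl⟩
  obtain ⟨b, hb⟩ : ∃ b, b = ‖y‖ ^ p := ⟨_, rfl⟩
  have nu : ‖u‖ = 1 := by
    rw [hu, norm_smul, norm_inv, norm_norm, inv_mul_cancel₀ nx.ne']
  have nv : ‖v‖ = 1 := by
    rw [hv, norm_smul, norm_inv, norm_norm, inv_mul_cancel₀ ny.ne']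
  have e1 : ‖x‖ ^ (p - 1) • x = a • u := by
    rw [ha, hu, smul_smul, Real.rpow_sub_one nx.ne', div_eq_mul_inv]
  have e2 : ‖y‖ ^ (p - 1) • y = b • v := by
    rw [hb, hv, smul_smul, Real.rpow_sub_one ny.ne', div_eq_mul_inv]
  have f1 : ‖x‖ ^ (2 * p) = a ^ 2 := by
    rw [ha, mul_comm, Real.rpow_mul nx.le, Real.rpow_two]
  have f2 : ‖y‖ ^ (2 * p) = b ^ 2 := by
    rw [hb, mul_comm, Real.rpow_mul ny.le, Real.rpow_two]
  unfold alphaD angularD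
  rw [e1, e2, f1, f2, ← hu, ← hv]
  have A : ‖u - v‖ ^ 2 = 2 - 2 * inner ℝ u v := by
    rw [norm_sub_sq_real, nu, nv]; ring
  have B : ‖a • u - b • v‖ ^ 2 = a ^ 2 + b ^ 2 - 2 * (a * b) * inner ℝ u v := by
    rw [norm_sub_sq_real, norm_smul, norm_smul, nu, nv, real_inner_smul_left,
      real_inner_smul_right, mul_one, mul_one, Real.norm_eq_abs, Real.norm_eq_abs,
      sq_abs, sq_abs]
    ring
  have C : (Real.sqrt ((a ^ 2 + b ^ 2) / 2) * ‖u - v‖) ^ 2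
      = (a ^ 2 + b ^ 2) * (1 - inner ℝ u v) := by
    rw [mul_pow, Real.sq_sqrt (by positivity), A]; ring
  have S : Real.sqrt 2 ^ 2 = 2 := Real.sq_sqrt (by norm_num)
  constructor
  · intro h
    have h2 := pow_le_pow_left₀ (norm_nonneg _) h 2
    have hc : 0 ≤ (inner ℝ u v : ℝ) := by linarith
    refine (pow_le_pow_iff_left₀ (by positivity) (by positivity) two_ne_zero).mp ?_
    rw [B, C]
    nlinarith [mul_nonneg hc (sq_nonneg (a - b))]
  · intro h
    have h2 := pow_le_pow_left₀ (Real.sqrt_nonneg _) h.le 2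
    have hc : 0 ≤ -(inner ℝ u v : ℝ) := by linarith
    refine (pow_le_pow_iff_left₀ (by positivity) (by positivity) two_ne_zero).mp ?_
    rw [B, C]
    nlinarith [mul_nonneg hc (sq_nonneg (a - b))]
end

section
/- Let X be a real inner product space, let r > 0, and let x, y ∈ X be nonzero vectors with x ≠ y. Set A = (‖x−y‖ − |‖x‖−‖y‖|)/min{‖x‖,‖y‖}, B = (‖x−y‖ + |‖x‖−‖y‖|)/max{‖x‖,‖y‖}, and c = (max{‖x‖,‖y‖}/min{‖x‖,‖y‖})·((‖x−y‖ − |‖x‖−‖y‖|)/(‖x−y‖ + |‖x‖−‖y‖|)) (so that c = A/B). Then ((1 + c^r)/2)^{−1/r}·A ≤ α[x,y] ≤ ((1 + c^r)/2)^{1/r}·B. -/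
theorem refined_angular_bounds_inner
    {X : Type*} [NormedAddCommGroup X] [InnerProductSpace ℝ X]
    (r : ℝ) (hr : 0 < r) (x y : X) (hx : x ≠ 0) (hy : y ≠ 0) (hxy : x ≠ y)
    (A B c : ℝ)
    (hA : A = (‖x - y‖ - |‖x‖ - ‖y‖|) / min ‖x‖ ‖y‖)
    (hB : B = (‖x - y‖ + |‖x‖ - ‖y‖|) / max ‖x‖ ‖y‖)
    (hc : c = (max ‖x‖ ‖y‖ / min ‖x‖ ‖y‖) *
        ((‖x - y‖ - |‖x‖ - ‖y‖|) / (‖x - y‖ + |‖x‖ - ‖y‖|))) :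
    ((1 + c ^ r) / 2) ^ (-1 / r) * A ≤ angularD x y ∧
      angularD x y ≤ ((1 + c ^ r) / 2) ^ (1 / r) * B := by
  have ha : 0 < ‖x‖ := norm_pos_iff.mpr hx
  have hb : 0 < ‖y‖ := norm_pos_iff.mpr hy
  have hd : 0 < ‖x - y‖ := norm_pos_iff.mpr (sub_ne_zero.mpr hxy)
  have htri : |‖x‖ - ‖y‖| ≤ ‖x - y‖ := abs_norm_sub_norm_le x y
  have hmin : 0 < min ‖x‖ ‖y‖ := lt_min ha hb
  have hmax : 0 < max ‖x‖ ‖y‖ := lt_max_of_lt_left ha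
  have hmm : min ‖x‖ ‖y‖ * max ‖x‖ ‖y‖ = ‖x‖ * ‖y‖ := min_mul_max _ _
  have habs := abs_nonneg (‖x‖ - ‖y‖)
  have hsum : 0 < ‖x - y‖ + |‖x‖ - ‖y‖| := by linarith
  have hBpos : 0 < B := by rw [hB]; positivity
  have hc0 : 0 ≤ c := by
    rw [hc]
    exact mul_nonneg (by positivity) (div_nonneg (by linarith) hsum.le)
  have hAc : A = c * B := by
    rw [hA, hB, hc]
    field_simp
  have hAB : A * B = angularD x y ^ 2 := by
    have h1 : ‖x - y‖ ^ 2 = ‖x‖ ^ 2 - 2 * inner ℝ x y + ‖y‖ ^ 2 := norm_sub_sq_real x y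
    have h2 : angularD x y ^ 2 = 2 - 2 * inner ℝ x y / (‖x‖ * ‖y‖) := by
      unfold angularD
      rw [norm_sub_sq_real, norm_smul, norm_smul, real_inner_smul_left, real_inner_smul_right,
        norm_inv, norm_inv, norm_norm, norm_norm]
      field_simp
      ring
    have h3 : A * B = (‖x - y‖ ^ 2 - |‖x‖ - ‖y‖| ^ 2) / (‖x‖ * ‖y‖) := by
      rw [hA, hB, div_mul_div_comm, hmm]
      congr 1
      ring
    rw [h3, h2, sq_abs, h1]
    field_simp
    ring
  have hα : angularD x y = √c * B := by
    have h0 : 0 ≤ angularD x y := norm_nonneg _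
    rw [← Real.sqrt_sq h0, ← hAB, hAc, mul_assoc, Real.sqrt_mul hc0,
      Real.sqrt_mul_self hBpos.le]
  have hcr : 0 ≤ c ^ r := Real.rpow_nonneg hc0 r
  have hM : 0 < (1 + c ^ r) / 2 := by linarith
  have key : √c ≤ ((1 + c ^ r) / 2) ^ (1 / r) := by
    have hs : 0 ≤ √c := Real.sqrt_nonneg c
    have e : c ^ r = (√c ^ r) ^ 2 := by
      nth_rewrite 1 [← Real.sq_sqrt hc0]
      rw [sq, sq, Real.mul_rpow hs hs]
    have h : √c ^ r ≤ (1 + c ^ r) / 2 := by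
      rw [e]
      nlinarith [sq_nonneg (√c ^ r - 1)]
    calc √c = (√c ^ r) ^ (1 / r) := by
          rw [← Real.rpow_mul hs, mul_one_div_cancel hr.ne', Real.rpow_one]
      _ ≤ _ := Real.rpow_le_rpow (Real.rpow_nonneg hs r) h (by positivity)
  refine ⟨?_, ?_⟩
  · rw [neg_div, Real.rpow_neg hM.le, hα, hAc, ← mul_assoc]
    refine mul_le_mul_of_nonneg_right ?_ hBpos.le
    rw [inv_mul_le_iff₀ (Real.rpow_pos_of_pos hM _)]
    nth_rewrite 1 [← Real.mul_self_sqrt hc0]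
    exact mul_le_mul_of_nonneg_right key (Real.sqrt_nonneg c)
  · rw [hα]
    exact mul_le_mul_of_nonneg_right key hBpos.le
end

section
/- Let X be a real normed linear space and let 0 < r ≤ 1. Then X is an inner product space (i.e., its norm satisfies the parallelogram law ‖x+y‖² + ‖x−y‖² = 2‖x‖² + 2‖y‖² for all x, y ∈ X) if and only if for all nonzero vectors x, y ∈ X with x ≠ y: α[x,y] ≤ ((1 + c[x,y]^r)/2)^{1/r}·((‖x−y‖ + |‖x‖−‖y‖|)/max{‖x‖,‖y‖}), where c[x,y] = (max{‖x‖,‖y‖}/min{‖x‖,‖y‖})·((‖x−y‖ − |‖x‖−‖y‖|)/(‖x−y‖ + |‖x‖−‖y‖|)). -/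
noncomputable section

namespace RAU

/-- algebraic identity in an inner product space -/
lemma inner_ident {X : Type*} [NormedAddCommGroup X] [InnerProductSpace ℝ X]
    (x y : X) (s t : ℝ) :
    ‖s • x - t • y‖ ^ 2 = s ^ 2 * ‖x‖ ^ 2 + t ^ 2 * ‖y‖ ^ 2
      - s * t * (‖x‖ ^ 2 + ‖y‖ ^ 2 - ‖x - y‖ ^ 2) := by
  rw [norm_sub_sq_real, norm_sub_sq_real, norm_smul, norm_smul, real_inner_smul_left,
    real_inner_smul_right, mul_pow, mul_pow, Real.norm_eq_abs, Real.norm_eq_abs, sq_abs, sq_abs]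
  ring

lemma ident {X : Type*} [NormedAddCommGroup X] [NormedSpace ℝ X]
    (H : ∀ x y : X, ‖x + y‖ ^ 2 + ‖x - y‖ ^ 2 = 2 * ‖x‖ ^ 2 + 2 * ‖y‖ ^ 2)
    (x y : X) (s t : ℝ) :
    ‖s • x - t • y‖ ^ 2 = s ^ 2 * ‖x‖ ^ 2 + t ^ 2 * ‖y‖ ^ 2
      - s * t * (‖x‖ ^ 2 + ‖y‖ ^ 2 - ‖x - y‖ ^ 2) :=
  @inner_ident X _ (InnerProductSpace.ofNorm ℝ (fun x y => by nlinarith [H x y])) x y s t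

lemma mean_lower (r c : ℝ) (hr : 0 < r) (hc : 0 ≤ c) :
    √c ≤ ((1 + c ^ r) / 2) ^ (1 / r) := by
  have h0 : 0 ≤ c ^ r := Real.rpow_nonneg hc r
  have h1 : √(c ^ r) ≤ (1 + c ^ r) / 2 := by
    have := Real.sq_sqrt h0
    nlinarith [sq_nonneg (√(c ^ r) - 1)]
  have h2 : √c = (√(c ^ r)) ^ (1 / r) := by
    rw [Real.sqrt_eq_rpow, Real.sqrt_eq_rpow, ← Real.rpow_mul hc, ← Real.rpow_mul hc]
    congr 1
    field_simp
  rw [h2]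
  exact Real.rpow_le_rpow (Real.sqrt_nonneg _) h1 (by positivity)

lemma mean_upper (r c : ℝ) (hr : 0 < r) (hr1 : r ≤ 1) (hc : 0 ≤ c) :
    ((1 + c ^ r) / 2) ^ (1 / r) ≤ (1 + c) / 2 := by
  have h0 : 0 ≤ c ^ r := Real.rpow_nonneg hc r
  have h1 : (1 + c ^ r) / 2 ≤ ((1 + c) / 2) ^ r := by
    have := (Real.concaveOn_rpow hr.le hr1).2 (show (1:ℝ) ∈ Set.Ici 0 by simp)
      (show c ∈ Set.Ici 0 from hc) (show (0:ℝ) ≤ 1/2 by norm_num) (show (0:ℝ) ≤ 1/2 by norm_num)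
      (by norm_num)
    simp only [smul_eq_mul, Real.one_rpow] at this
    rw [show (1 + c) / 2 = 1 / 2 * 1 + 1 / 2 * c by ring]
    linarith
  calc ((1 + c ^ r) / 2) ^ (1 / r) ≤ (((1 + c) / 2) ^ r) ^ (1 / r) :=
        Real.rpow_le_rpow (by positivity) h1 (by positivity)
    _ = (1 + c) / 2 := by
        rw [← Real.rpow_mul (by positivity), mul_one_div_cancel hr.ne', Real.rpow_one]

section
variable {X : Type*} [NormedAddCommGroup X] [NormedSpace ℝ X]

/-- key quadratic inequality -/
def Key (X : Type*) [NormedAddCommGroup X] [NormedSpace ℝ X] : Prop :=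
  ∀ m h : X, ∀ N e : ℝ, ‖m + h‖ = N → ‖m - h‖ = N → -1 < e → e < 1 →
    (1 - e ^ 2) * ‖m‖ + e ^ 2 * N ≤ ‖m + e • h‖

lemma iv (m h : X) (hh : h ≠ 0) (t N : ℝ) (ht : ‖m - t • h‖ ≤ N) :
    ∃ s, t ≤ s ∧ ‖m - s • h‖ = N := by
  have hp : 0 < ‖h‖ := norm_pos_iff.2 hh
  set b := max t ((N + ‖m‖) / ‖h‖)
  have hb : N ≤ ‖m - b • h‖ := by
    have h1 : (N + ‖m‖) ≤ b * ‖h‖ := by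
      rw [← div_le_iff₀ hp]; exact le_max_right _ _
    have h2 : ‖b • h‖ ≤ ‖m - b • h‖ + ‖m‖ := by
      have := norm_sub_le m (m - b • h)
      rw [sub_sub_cancel] at this
      linarith
    have h3 : b * ‖h‖ ≤ ‖b • h‖ := by
      rw [norm_smul]; gcongr; exact le_abs_self b
    linarith
  have hc : ContinuousOn (fun s : ℝ => ‖m - s • h‖) (Set.Icc t b) := by fun_prop
  obtain ⟨s, hs, e⟩ := intermediate_value_Icc (le_max_left _ _) hc ⟨ht, hb⟩
  exact ⟨s, hs.1, e⟩

lemma mid_min (K : Key X) (m h : X) (E : ‖m + h‖ = ‖m - h‖) (t : ℝ) :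
    ‖m‖ ≤ ‖m + t • h‖ := by
  have hm : ‖m‖ ≤ ‖m + h‖ := by
    have := norm_add_le (m + h) (m - h)
    rw [show m + h + (m - h) = (2:ℝ) • m by module, norm_smul] at this
    norm_num at this; linarith
  have main : ∀ h : X, ‖m + h‖ = ‖m - h‖ → ‖m‖ ≤ ‖m + h‖ → ∀ t : ℝ, 0 ≤ t →
      ‖m‖ ≤ ‖m + t • h‖ := by
    intro h E hm t ht
    rcases lt_or_ge t 1 with h1 | h1
    · have := K m h _ t rfl E.symm (by linarith) h1
      nlinarith [sq_nonneg t]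
    · have h2 : ‖t • (m + h)‖ ≤ ‖(t - 1) • m‖ + ‖m + t • h‖ := by
        have := norm_add_le ((t - 1) • m) (m + t • h)
        rwa [show (t - 1) • m + (m + t • h) = t • (m + h) by module] at this
      rw [norm_smul, norm_smul, Real.norm_of_nonneg ht, Real.norm_of_nonneg (by linarith)] at h2
      nlinarith
  rcases le_total 0 t with ht | ht
  · exact main _ E hm t ht
  · have := main (-h) (by rw [← sub_eq_add_neg, sub_neg_eq_add, E]) (by
      rw [← sub_eq_add_neg, ← E]; exact hm) (-t) (by linarith)
    simpa using this

/-- homogeneity of isosceles orthogonality -/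
lemma ficken_le (K : Key X) (m h : X) (E : ‖m + h‖ = ‖m - h‖) (t : ℝ) (ht : 0 < t) :
    ‖m + t • h‖ ≤ ‖m - t • h‖ := by
  by_contra hlt
  push Not at hlt
  have hh : h ≠ 0 := by rintro rfl; simp at hlt
  obtain ⟨s, hs, e⟩ := iv m h hh t _ hlt.le
  have hne : s ≠ t := by rintro rfl; linarith
  have hs' : t < s := lt_of_le_of_ne hs hne.symm
  set c : X := m + ((t - s) / 2) • h with hc
  set k : X := ((t + s) / 2) • h with hk
  have h1 : ‖c + k‖ = ‖m + t • h‖ := by congr 1; rw [hc, hk]; module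
  have h2 : ‖c - k‖ = ‖m + t • h‖ := by rw [← e]; congr 1; rw [hc, hk]; module
  have hpos : 0 < t + s := by linarith
  have h3 := K c k _ ((s - t) / (t + s)) h1 h2
    (by rw [lt_div_iff₀ hpos]; linarith) (by rw [div_lt_iff₀ hpos]; linarith)
  have h4 : c + ((s - t) / (t + s)) • k = m := by
    rw [hc, hk, smul_smul, add_assoc, ← add_smul,
      show (t - s) / 2 + (s - t) / (t + s) * ((t + s) / 2) = 0 by field_simp; ring]
    simp
  rw [h4] at h3
  have h5 : ‖m‖ ≤ ‖c‖ := mid_min K m h E _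
  have h6 : ‖m‖ ≤ ‖m - t • h‖ := by
    have := mid_min K m h E (-t)
    rwa [neg_smul, ← sub_eq_add_neg] at this
  have h7 : 0 < ((s - t) / (t + s)) ^ 2 := by
    have : 0 < (s - t) / (t + s) := div_pos (by linarith) hpos
    positivity
  have h8 : ((s - t) / (t + s)) ^ 2 < 1 := by
    rw [sq_lt_one_iff_abs_lt_one, abs_of_pos (div_pos (by linarith) hpos), div_lt_one hpos]
    linarith
  nlinarith

def Orth (m h : X) : Prop := ‖m + h‖ = ‖m - h‖

lemma Orth.symm {m h : X} (o : Orth m h) : Orth h m := by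
  unfold Orth at *
  rw [add_comm, o, norm_sub_rev]

lemma Orth.smul (K : Key X) {m h : X} (o : Orth m h) (t : ℝ) : Orth m (t • h) := by
  have main : ∀ h : X, Orth m h → ∀ t : ℝ, 0 < t → Orth m (t • h) := by
    intro h o t ht
    apply le_antisymm (ficken_le K m h o t ht)
    have := ficken_le K m (-h) (by rw [← sub_eq_add_neg, sub_neg_eq_add]; exact Eq.symm o) t ht
    simpa [← sub_eq_add_neg] using this
  rcases lt_trichotomy t 0 with h0 | h0 | h0
  · have := main (-h) (by unfold Orth; rw [← sub_eq_add_neg, sub_neg_eq_add]; exact Eq.symm o)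
      (-t) (by linarith)
    simpa using this
  · subst h0; simp [Orth]
  · exact main h o t h0

lemma Orth.smul2 (K : Key X) {m h : X} (o : Orth m h) (s t : ℝ) : Orth (s • m) (t • h) :=
  (((o.smul K t).symm).smul K s).symm

lemma foot (K : Key X) (x y : X) (hx : x ≠ 0) : ∃ l : ℝ, Orth (y - l • x) x := by
  have main : ∀ x : X, x ≠ 0 → ‖y - x‖ ≤ ‖y + x‖ → ∃ l : ℝ, Orth (y - l • x) x := by
    intro x hx hle
    obtain ⟨s, hs, e⟩ := iv y x hx 1 ‖y + x‖ (by simpa using hle)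
    have hpos : 0 < 1 + s := by linarith
    have o : Orth (y - ((s - 1) / 2) • x) (((1 + s) / 2) • x) := by
      unfold Orth
      rw [show y - ((s - 1) / 2) • x + ((1 + s) / 2) • x = y + x by module,
        show y - ((s - 1) / 2) • x - ((1 + s) / 2) • x = y - s • x by module, e]
    refine ⟨(s - 1) / 2, ?_⟩
    have := o.smul K (2 / (1 + s))
    rwa [smul_smul, show 2 / (1 + s) * ((1 + s) / 2) = 1 by field_simp, one_smul] at this
  rcases le_total ‖y - x‖ ‖y + x‖ with h | h
  · exact main x hx h
  · obtain ⟨l, hl⟩ := main (-x) (neg_ne_zero.2 hx) (by simpa [← sub_eq_add_neg] using h)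
    refine ⟨-l, ?_⟩
    have := hl.smul K (-1)
    simpa using this

lemma uniq (K : Key X) (p h : X) (v : ℝ) (hh : h ≠ 0) (o1 : Orth p h) (o2 : Orth (p + v • h) h) :
    v = 0 := by
  by_contra hv
  have per : ∀ t : ℝ, ‖p + (t + 2 * v) • h‖ = ‖p + t • h‖ := by
    intro t
    have a := o2.smul K (v + t)
    have b := o1.smul K t
    unfold Orth at a b
    rw [b, show p + (t + 2 * v) • h = p + v • h + (v + t) • h by module, a]
    congr 1; module
  have pern : ∀ n : ℕ, ‖p + ((n:ℝ) * (2 * v)) • h‖ = ‖p‖ := by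
    intro n
    induction n with
    | zero => simp
    | succ n ih =>
      rw [← ih, ← per ((n:ℝ) * (2 * v))]; congr 3; push_cast; ring
  have hp : 0 < ‖(2 * v) • h‖ := norm_pos_iff.2 (smul_ne_zero (by simpa using hv) hh)
  obtain ⟨n, hn⟩ := exists_nat_gt ((2 * ‖p‖) / ‖(2 * v) • h‖)
  rw [div_lt_iff₀ hp] at hn
  have h1 := norm_sub_le (p + ((n:ℝ) * (2 * v)) • h) p
  rw [pern, add_sub_cancel_left, mul_smul, norm_smul, Real.norm_natCast] at h1
  linarith

lemma unit_eq (K : Key X) (e f : X) (he : ‖e‖ = 1) (hf : ‖f‖ = 1) (o : Orth e f) (a b : ℝ)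
    (hu : ‖a • e + b • f‖ = 1) : a ^ 2 + b ^ 2 = 1 := by
  have swap : ∀ u v : X, ‖u‖ = ‖v‖ → ∀ s t : ℝ, ‖s • u + t • v‖ = ‖t • u + s • v‖ := by
    intro u v huv s t
    have o : Orth (u + v) (u - v) := by
      unfold Orth
      rw [show u + v + (u - v) = (2:ℝ) • u by module, show u + v - (u - v) = (2:ℝ) • v by module,
        norm_smul, norm_smul, huv]
    have := o.smul2 K ((s + t) / 2) ((s - t) / 2)
    unfold Orth at this
    rw [show s • u + t • v = ((s + t) / 2) • (u + v) + ((s - t) / 2) • (u - v) by module, this]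
    congr 1; module
  set u := a • e + b • f with hudef
  have hu0 : u ≠ 0 := by intro h; rw [h] at hu; simp at hu
  have sgn : ∀ s t : ℝ, ‖s • e + t • f‖ = ‖s • e - t • f‖ := fun s t => o.smul2 K s t
  have oJ : Orth ((-b) • e + a • f) u := by
    unfold Orth
    rw [hudef, show (-b) • e + a • f + (a • e + b • f) = (a - b) • e + (a + b) • f by module,
      swap e f (by rw [he, hf]), sgn, ← norm_neg]
    congr 1; module
  by_cases hb : b = 0
  · subst hb
    rw [hudef] at hu
    simp [norm_smul, he] at hu
    rw [← sq_abs a, hu]; norm_num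
  by_cases ha : a = 0
  · subst ha
    rw [hudef] at hu
    simp [norm_smul, hf] at hu
    rw [← sq_abs b, hu]; norm_num
  -- e - a u ⟂ u
  have o2 : Orth (e - a • u) u := by
    have h1 : Orth (u - a • e) e := by
      rw [hudef, show a • e + b • f - a • e = b • f by module]
      simpa using o.symm.smul2 K b 1
    unfold Orth at *
    have s1 := swap u e (by rw [hu, he]) 1 (1 - a)
    have s2 := swap u e (by rw [hu, he]) 1 (-a - 1)
    calc ‖e - a • u + u‖ = ‖(1 - a) • u + (1:ℝ) • e‖ := by congr 1; module
      _ = ‖u - a • e + e‖ := by rw [← s1]; congr 1; module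
      _ = ‖u - a • e - e‖ := h1
      _ = ‖(1:ℝ) • u + (-a - 1) • e‖ := by congr 1; module
      _ = ‖e - a • u - u‖ := by rw [s2]; congr 1; module
  have hq : 0 < a ^ 2 + b ^ 2 := by positivity
  have o3 : Orth ((-b / (a ^ 2 + b ^ 2)) • ((-b) • e + a • f)) u := by
    simpa using oJ.smul2 K (-b / (a ^ 2 + b ^ 2)) 1
  have := uniq K _ u (a / (a ^ 2 + b ^ 2) - a) hu0 o3 (by
    convert o2 using 1
    rw [hudef]
    match_scalars <;> field_simp <;> ring)
  field_simp at this
  rw [mul_zero] at this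
  have := (mul_eq_zero.1 this).resolve_left ha
  linarith

lemma norm_frame (K : Key X) (e f : X) (he : ‖e‖ = 1) (hf : ‖f‖ = 1) (o : Orth e f) (a b : ℝ) :
    ‖a • e + b • f‖ ^ 2 = a ^ 2 + b ^ 2 := by
  by_cases h0 : a • e + b • f = 0
  · have h1 : ‖a • e + b • f‖ = ‖a • e - b • f‖ := o.smul2 K a b
    rw [h0, norm_zero] at h1
    have h2 := norm_eq_zero.1 h1.symm
    have h3 : (2 * a) • e = 0 := by
      rw [show (2 * a) • e = (a • e + b • f) + (a • e - b • f) by module, h0, h2, add_zero]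
    have h4 : (2 * b) • f = 0 := by
      rw [show (2 * b) • f = (a • e + b • f) - (a • e - b • f) by module, h0, h2, sub_zero]
    have e0 : e ≠ 0 := by rintro rfl; simp at he
    have f0 : f ≠ 0 := by rintro rfl; simp at hf
    simp [e0] at h3
    simp [f0] at h4
    simp [h3, h4]
  · set n := ‖a • e + b • f‖ with hn
    have hp : 0 < n := norm_pos_iff.2 h0
    have := unit_eq K e f he hf o (n⁻¹ * a) (n⁻¹ * b) (by
      rw [mul_smul, mul_smul, ← smul_add, norm_smul, ← hn, norm_inv, Real.norm_of_nonneg hp.le]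
      field_simp)
    field_simp at this
    linarith

lemma para (K : Key X) (x y : X) :
    ‖x + y‖ ^ 2 + ‖x - y‖ ^ 2 = 2 * ‖x‖ ^ 2 + 2 * ‖y‖ ^ 2 := by
  by_cases hx : x = 0
  · subst hx; simp; ring
  obtain ⟨l, hl⟩ := foot K x y hx
  by_cases hp : y - l • x = 0
  · have : y = l • x := sub_eq_zero.1 hp
    rw [this, show x + l • x = (1 + l) • x by module, show x - l • x = (1 - l) • x by module]
    simp only [norm_smul, mul_pow, Real.norm_eq_abs, sq_abs]
    ring
  set p := y - l • x with hpdef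
  have nx : ‖x‖ ≠ 0 := norm_ne_zero_iff.2 hx
  have np : ‖p‖ ≠ 0 := norm_ne_zero_iff.2 hp
  have F := norm_frame K (‖x‖⁻¹ • x) (‖p‖⁻¹ • p) (by rw [norm_smul, norm_inv, norm_norm]; field_simp)
    (by rw [norm_smul, norm_inv, norm_norm]; field_simp) (hl.symm.smul2 K _ _)
  have G : ∀ s t : ℝ, ‖s • x + t • p‖ ^ 2 = (s * ‖x‖) ^ 2 + (t * ‖p‖) ^ 2 := by
    intro s t
    rw [← F, smul_smul, smul_smul, mul_assoc, mul_inv_cancel₀ nx, mul_assoc, mul_inv_cancel₀ np,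
      mul_one, mul_one]
  have y1 : y = l • x + (1:ℝ) • p := by rw [hpdef]; module
  have y2 : x + y = (1 + l) • x + (1:ℝ) • p := by rw [hpdef]; module
  have y3 : x - y = (1 - l) • x + (-1:ℝ) • p := by rw [hpdef]; module
  have y4 : ‖y‖ ^ 2 = (l * ‖x‖) ^ 2 + (1 * ‖p‖) ^ 2 := by
    rw [← G, ← y1]
  rw [y2, y3, G, G, y4]
  ring

lemma key_of (r : ℝ) (hr0 : 0 < r) (hr1 : r ≤ 1) (H : ∀ x y : X, x ≠ 0 → y ≠ 0 → x ≠ y →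
        angularD x y
          ≤ ((1 + ((max ‖x‖ ‖y‖ / min ‖x‖ ‖y‖) *
                ((‖x - y‖ - |‖x‖ - ‖y‖|) / (‖x - y‖ + |‖x‖ - ‖y‖|))) ^ r) / 2) ^ (1 / r) *
              ((‖x - y‖ + |‖x‖ - ‖y‖|) / max ‖x‖ ‖y‖)) : Key X := by
  have main : ∀ m h : X, ∀ N e : ℝ, ‖m + h‖ = N → ‖m - h‖ = N → 0 < e → e < 1 →
    (1 - e ^ 2) * ‖m‖ + e ^ 2 * N ≤ ‖m + e • h‖ := by
    intro m h N e h1 h2 e0 e1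
    have hN0 : 0 ≤ N := h1 ▸ norm_nonneg _
    rcases hN0.eq_or_lt with hN | hN
    · subst hN
      have a1 := norm_eq_zero.1 h1
      have a2 := norm_eq_zero.1 h2
      have a3 : m = 0 := by
        rw [show m = (1/2:ℝ) • ((m + h) + (m - h)) by module, a1, a2]; simp
      simp [a3]; 
    by_cases hz : m + e • h = 0
    · have hm : m = (-e) • h := by rw [neg_smul]; exact eq_neg_of_add_eq_zero_left hz
      rw [hm, show (-e) • h + h = (1 - e) • h by module, norm_smul,
        Real.norm_of_nonneg (by linarith)] at h1
      rw [hm, show (-e) • h - h = (-(1 + e)) • h by module, norm_smul, norm_neg,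
        Real.norm_of_nonneg (by linarith)] at h2
      have : e * ‖h‖ = 0 := by linarith
      have h3 : ‖h‖ = 0 := by
        rcases mul_eq_zero.1 this with q | q
        · linarith
        · exact q
      rw [h3] at h1; linarith
    set x := (1 + e) • (m + h) with hx
    set y := (-(1 - e)) • (m - h) with hy
    have nx : ‖x‖ = (1 + e) * N := by
      rw [hx, norm_smul, h1, Real.norm_of_nonneg (by linarith)]
    have ny : ‖y‖ = (1 - e) * N := by
      rw [hy, norm_smul, h2, norm_neg, Real.norm_of_nonneg (by linarith)]
    have xy : x - y = (2:ℝ) • (m + e • h) := by rw [hx, hy]; module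
    have nxy : ‖x - y‖ = 2 * ‖m + e • h‖ := by rw [xy, norm_smul]; norm_num
    have px : 0 < (1 + e) * N := by positivity
    have py : 0 < (1 - e) * N := mul_pos (by linarith) hN
    have HH := H x y (norm_pos_iff.1 (nx ▸ px)) (norm_pos_iff.1 (ny ▸ py)) (by
      intro hxy
      rw [sub_eq_zero.2 hxy] at xy
      exact hz ((smul_eq_zero.1 xy.symm).resolve_left (by norm_num)))
    have ang : angularD x y = 2 * ‖m‖ / N := by
      unfold angularD
      rw [nx, ny, hx, hy]
      have : ((1 + e) * N)⁻¹ • (1 + e) • (m + h) - ((1 - e) * N)⁻¹ • (-(1 - e)) • (m - h)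
          = (2 / N) • m := by
        have : 1 + e ≠ 0 := by linarith
        have : 1 - e ≠ 0 := by linarith
        match_scalars <;> field_simp <;> ring
      rw [this, norm_smul, Real.norm_of_nonneg (by positivity)]
      ring
    have tri := norm_sub_norm_le x y
    rw [nx, ny, nxy] at tri
    rw [ang, nx, ny, nxy, max_eq_left (by nlinarith), min_eq_right (by nlinarith),
      abs_of_nonneg (by nlinarith)] at HH
    set D := ‖m + e • h‖ with hD
    have Dp : 0 < D := norm_pos_iff.2 hz
    have den : 0 < 2 * D + ((1 + e) * N - (1 - e) * N) := by nlinarith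
    have cn : 0 ≤ (1 + e) * N / ((1 - e) * N) * ((2 * D - ((1 + e) * N - (1 - e) * N)) /
        (2 * D + ((1 + e) * N - (1 - e) * N))) := by
      apply mul_nonneg (by positivity) (div_nonneg (by linarith) den.le)
    have := HH.trans (mul_le_mul_of_nonneg_right (mean_upper r _ hr0 hr1 cn)
      (div_nonneg den.le px.le))
    have e1' : 0 < 1 - e := by linarith
    have eq : (1 + (1 + e) * N / ((1 - e) * N) * ((2 * D - ((1 + e) * N - (1 - e) * N)) /
        (2 * D + ((1 + e) * N - (1 - e) * N)))) / 2 *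
        ((2 * D + ((1 + e) * N - (1 - e) * N)) / ((1 + e) * N))
        = (2 * D - 2 * e ^ 2 * N) / ((1 - e ^ 2) * N) := by
      have q1 : (1 - e ^ 2) = (1 - e) * (1 + e) := by ring
      rw [q1]
      set S := 2 * D + ((1 + e) * N - (1 - e) * N) with hS
      have q2 : D = (S - ((1 + e) * N - (1 - e) * N)) / 2 := by rw [hS]; ring
      rw [q2]
      field_simp
      ring
    rw [eq] at this
    have q : 0 < 1 - e ^ 2 := by nlinarith
    rw [div_le_div_iff₀ hN (by positivity)] at this
    have : (2 * ‖m‖ * (1 - e ^ 2)) * N ≤ (2 * D - 2 * e ^ 2 * N) * N := by linarith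
    have := le_of_mul_le_mul_right this hN
    linarith
  intro m h N e h1 h2 e0 e1
  rcases lt_trichotomy e 0 with q | q | q
  · have := main m (-h) N (-e) (by rwa [← sub_eq_add_neg]) (by rwa [sub_neg_eq_add])
      (by linarith) (by linarith)
    simpa using this
  · subst q; simp
  · exact main m h N e h1 h2 q e1

end

end RAU

end

theorem refined_angular_upper_bound_characterizes_inner
    {X : Type*} [NormedAddCommGroup X] [NormedSpace ℝ X]
    (r : ℝ) (hr0 : 0 < r) (hr1 : r ≤ 1) :
    (∀ x y : X, ‖x + y‖ ^ 2 + ‖x - y‖ ^ 2 = 2 * ‖x‖ ^ 2 + 2 * ‖y‖ ^ 2) ↔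
      (∀ x y : X, x ≠ 0 → y ≠ 0 → x ≠ y →
        angularD x y
          ≤ ((1 + ((max ‖x‖ ‖y‖ / min ‖x‖ ‖y‖) *
                ((‖x - y‖ - |‖x‖ - ‖y‖|) / (‖x - y‖ + |‖x‖ - ‖y‖|))) ^ r) / 2) ^ (1 / r) *
              ((‖x - y‖ + |‖x‖ - ‖y‖|) / max ‖x‖ ‖y‖)) := by
  constructor
  · intro H x y hx hy hxy
    have pa : 0 < ‖x‖ := norm_pos_iff.2 hx
    have pb : 0 < ‖y‖ := norm_pos_iff.2 hy
    have pd : 0 < ‖x - y‖ := norm_pos_iff.2 (sub_ne_zero.2 hxy)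
    have tri : |‖x‖ - ‖y‖| ≤ ‖x - y‖ := abs_norm_sub_norm_le x y
    have I := RAU.ident H x y ‖x‖⁻¹ ‖y‖⁻¹
    have hM : 0 < max ‖x‖ ‖y‖ := lt_max_of_lt_left pa
    have hm : 0 < min ‖x‖ ‖y‖ := lt_min pa pb
    have hMm : max ‖x‖ ‖y‖ * min ‖x‖ ‖y‖ = ‖x‖ * ‖y‖ := max_mul_min _ _
    have habs : |‖x‖ - ‖y‖| ^ 2 = (‖x‖ - ‖y‖) ^ 2 := sq_abs _
    have hab0 := abs_nonneg (‖x‖ - ‖y‖)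
    unfold angularD
    set M := max ‖x‖ ‖y‖
    set m := min ‖x‖ ‖y‖
    set δ := |‖x‖ - ‖y‖|
    set d := ‖x - y‖
    have den : 0 < d + δ := by linarith
    have cn : 0 ≤ M / m * ((d - δ) / (d + δ)) :=
      mul_nonneg (by positivity) (div_nonneg (by linarith) den.le)
    refine le_trans ?_ (mul_le_mul_of_nonneg_right (RAU.mean_lower r _ hr0 cn)
      (div_nonneg den.le hM.le))
    apply abs_le_of_sq_le_sq' _ (by positivity) |>.2
    rw [mul_pow, Real.sq_sqrt cn, I]
    apply le_of_eq
    have : M / m * ((d - δ) / (d + δ)) * ((d + δ) / M) ^ 2 = (d ^ 2 - δ ^ 2) / (M * m) := by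
      field_simp
      ring
    rw [this, hMm, habs]
    field_simp
    ring
  · intro H x y
    exact RAU.para (RAU.key_of r hr0 hr1 H) x y
end
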